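/- arXiv:2307.04102 — 7 statements merged into one kernel-verified Lean document; each statement's English description precedes it below -/
import Mathlib

section
/- Let λ > 0 and let F₁,…,F_p : ℝⁿ → ℝ (ℝⁿ = ℝᵐ × ℝᵈ) be twice continuously differentiable with ‖∇F_j(z)‖ ≤ L and ‖∇²F_j(z)‖ ≤ M for all z and j, and for β ∈ ℝᵖ set φ_β = Σ_{j=1}^p β_j F_j. Then for every fixed z' ∈ ℝⁿ, the function β ↦ φ_β^c(z') is differentiable at β = 0, and its partial derivative with respect to β_j at β = 0 equals −F_j(z'). -/
/-!
Testing the infimum at `z = z'` gives `φ_β^c(z') ≤ -φ_β(z')`. Conversely, the cost dominates `a r²`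
with `r` the distance from `z` to `z'` and `a = min(λ,1)/2`, while `φ_β(z) - φ_β(z') ≤ K r` with
`K = O(‖β‖)`; minimizing `a r² - K r` over `r` gives `φ_β^c(z') ≥ -φ_β(z') - K²/(4a)`. Hence
`φ_β^c(z')` differs from the linear function `β ↦ -∑ β_j F_j(z')` by `O(‖β‖²)`, which identifies its
derivative at `0`.
-/

open scoped RealInnerProductSpace
open MeasureTheory

noncomputable section

/-- The product space `ℝᵐ × ℝᵈ` whose points are written `z = (y, x)`. -/
abbrev Zsp (m d : ℕ) := EuclideanSpace ℝ (Fin m) × EuclideanSpace ℝ (Fin d)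

/-- Weighted quadratic cost `c_λ(z,z') = (1/2)(λ‖y−y'‖² + ‖x−x'‖²)`. -/
noncomputable def cost (lam : ℝ) {m d : ℕ} (z z' : Zsp m d) : ℝ :=
  (lam * ‖z.1 - z'.1‖ ^ 2 + ‖z.2 - z'.2‖ ^ 2) / 2

/-- The `c`-transform `φ^c(z') = inf_z (c_λ(z,z') − φ(z))`. -/
noncomputable def ctrans (lam : ℝ) {m d : ℕ} (φ : Zsp m d → ℝ) (z' : Zsp m d) : ℝ :=
  ⨅ z : Zsp m d, (cost lam z z' - φ z)

/-- Partial gradient in the `y` variable. -/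
noncomputable def gradY {m d : ℕ} (F : Zsp m d → ℝ) (z : Zsp m d) :
    EuclideanSpace ℝ (Fin m) :=
  gradient (fun y => F (y, z.2)) z.1

/-- Partial gradient in the `x` variable. -/
noncomputable def gradX {m d : ℕ} (F : Zsp m d → ℝ) (z : Zsp m d) :
    EuclideanSpace ℝ (Fin d) :=
  gradient (fun x => F (z.1, x)) z.2

/-- Rescaled gradient `∇_λF(z) = (∇_yF(z)/λ, ∇_xF(z))`. -/
noncomputable def gradLam (lam : ℝ) {m d : ℕ} (F : Zsp m d → ℝ) (z : Zsp m d) : Zsp m d :=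
  (lam⁻¹ • gradY F z, gradX F z)

/-- `⟨∇F(z), ∇_λG(z)⟩ = ⟨∇_yF(z), ∇_yG(z)⟩/λ + ⟨∇_xF(z), ∇_xG(z)⟩`. -/
noncomputable def innerLam (lam : ℝ) {m d : ℕ} (F G : Zsp m d → ℝ) (z : Zsp m d) : ℝ :=
  ⟪gradY F z, gradY G z⟫ / lam + ⟪gradX F z, gradX G z⟫

section CoerciveCost

variable {X : Type*} [PseudoMetricSpace X] {c : X → ℝ} {x₀ : X} {a K : ℝ}

lemma mul_sub_mul_sq_le (ha : 0 < a) (K r : ℝ) : K * r - a * r ^ 2 ≤ K ^ 2 / (4 * a) := by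
  rw [le_div_iff₀ (by positivity)]
  nlinarith [sq_nonneg (K - 2 * a * r)]

lemma neg_sub_sq_div_le_cost_sub (ha : 0 < a) (hc : ∀ x, a * dist x x₀ ^ 2 ≤ c x) {φ : X → ℝ}
    (hφ : ∀ x, φ x - φ x₀ ≤ K * dist x x₀) (x : X) :
    -φ x₀ - K ^ 2 / (4 * a) ≤ c x - φ x := by
  linarith [hc x, hφ x, mul_sub_mul_sq_le ha K (dist x x₀)]

lemma abs_iInf_cost_sub_add_le (ha : 0 < a) (hc₀ : c x₀ = 0) (hc : ∀ x, a * dist x x₀ ^ 2 ≤ c x)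
    {φ : X → ℝ} (hφ : ∀ x, φ x - φ x₀ ≤ K * dist x x₀) :
    |(⨅ x, (c x - φ x)) + φ x₀| ≤ K ^ 2 / (4 * a) := by
  have hlower := neg_sub_sq_div_le_cost_sub ha hc hφ
  have : Nonempty X := ⟨x₀⟩
  have hge : -φ x₀ - K ^ 2 / (4 * a) ≤ ⨅ x, (c x - φ x) := le_ciInf hlower
  have hle : ⨅ x, (c x - φ x) ≤ c x₀ - φ x₀ := ciInf_le ⟨_, Set.forall_mem_range.2 hlower⟩ x₀
  rw [abs_le]
  exact ⟨by linarith, by linarith [show 0 ≤ K ^ 2 / (4 * a) by positivity]⟩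

lemma hasFDerivAt_iInf_cost_sub {V : Type*} [NormedAddCommGroup V] [NormedSpace ℝ V]
    {φ : V → X → ℝ} {φ' : V →L[ℝ] ℝ} {v₀ : V} (ha : 0 < a) (hc₀ : c x₀ = 0)
    (hc : ∀ x, a * dist x x₀ ^ 2 ≤ c x) (hφ' : HasFDerivAt (fun v => φ v x₀) φ' v₀)
    (hφ : ∀ᶠ v in nhds v₀, ∀ x, φ v x - φ v x₀ ≤ K * ‖v - v₀‖ * dist x x₀) :
    HasFDerivAt (fun v => ⨅ x, (c x - φ v x)) (-φ') v₀ := by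
  have hO : (fun v => (⨅ x, (c x - φ v x)) + φ v x₀) =O[nhds v₀] fun v => ‖v - v₀‖ ^ 2 := by
    refine .of_bound (K ^ 2 / (4 * a)) (hφ.mono fun v hv => ?_)
    calc ‖(⨅ x, (c x - φ v x)) + φ v x₀‖
        ≤ (K * ‖v - v₀‖) ^ 2 / (4 * a) := abs_iInf_cost_sub_add_le ha hc₀ hc hv
      _ = K ^ 2 / (4 * a) * ‖‖v - v₀‖ ^ 2‖ := by rw [norm_pow, norm_norm]; ring
  simpa using (hO.hasFDerivAt one_lt_two).fun_sub hφ'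

end CoerciveCost

lemma abs_sub_le_mul_dist_of_norm_fderiv_le {E : Type*} [NormedAddCommGroup E] [NormedSpace ℝ E]
    {f : E → ℝ} {L : ℝ} (hf : Differentiable ℝ f) (hL : ∀ z, ‖fderiv ℝ f z‖ ≤ L) (z z' : E) :
    |f z - f z'| ≤ L * dist z z' := by
  rw [dist_eq_norm]
  exact convex_univ.norm_image_sub_le_of_norm_fderiv_le (fun x _ => hf x) (fun x _ => hL x)
    (Set.mem_univ z') (Set.mem_univ z)

lemma cost_self (lam : ℝ) {m d : ℕ} (z : Zsp m d) : cost lam z z = 0 := by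
  simp [cost]

-- The distance on `Zsp m d` is the maximum, not the Euclidean combination, of the two distances.
lemma mul_dist_sq_le_cost {lam : ℝ} (hlam : 0 ≤ lam) {m d : ℕ} (z z' : Zsp m d) :
    min lam 1 / 2 * dist z z' ^ 2 ≤ cost lam z z' := by
  have hy : min lam 1 * ‖z.1 - z'.1‖ ^ 2 ≤ lam * ‖z.1 - z'.1‖ ^ 2 := by gcongr; exact min_le_left ..
  have hx : min lam 1 * ‖z.2 - z'.2‖ ^ 2 ≤ 1 * ‖z.2 - z'.2‖ ^ 2 := by gcongr; exact min_le_right ..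
  have hy₀ : 0 ≤ lam * ‖z.1 - z'.1‖ ^ 2 := by positivity
  have hx₀ : 0 ≤ ‖z.2 - z'.2‖ ^ 2 := by positivity
  rw [Prod.dist_eq, dist_eq_norm, dist_eq_norm, cost]
  rcases max_choice ‖z.1 - z'.1‖ ‖z.2 - z'.2‖ with h | h <;> rw [h] <;> linarith

section LinearCombination

variable {ι : Type*} [Fintype ι]

lemma abs_sum_mul_le_card_mul (β : EuclideanSpace ℝ ι) {u : ι → ℝ} {B : ℝ}
    (hu : ∀ j, |u j| ≤ B) : |∑ j, β j * u j| ≤ Fintype.card ι * (‖β‖ * B) := by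
  calc |∑ j, β j * u j| ≤ ∑ j, |β j * u j| := Finset.abs_sum_le_sum_abs _ _
    _ ≤ ∑ _j : ι, ‖β‖ * B := by
        gcongr with j
        rw [abs_mul]
        exact mul_le_mul (PiLp.norm_apply_le β j) (hu j) (abs_nonneg _) (norm_nonneg _)
    _ = Fintype.card ι * (‖β‖ * B) := by simp

lemma sum_mul_sub_sum_mul_le {X : Type*} [PseudoMetricSpace X] {F : ι → X → ℝ} {L : ℝ} {x₀ : X}
    (hF : ∀ j x, |F j x - F j x₀| ≤ L * dist x x₀) (β : EuclideanSpace ℝ ι) (x : X) :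
    ∑ j, β j * F j x - ∑ j, β j * F j x₀ ≤ Fintype.card ι * L * ‖β‖ * dist x x₀ := by
  calc ∑ j, β j * F j x - ∑ j, β j * F j x₀ = ∑ j, β j * (F j x - F j x₀) := by
        simp only [mul_sub, Finset.sum_sub_distrib]
    _ ≤ Fintype.card ι * (‖β‖ * (L * dist x x₀)) :=
        (le_abs_self _).trans (abs_sum_mul_le_card_mul β fun j => hF j x)
    _ = Fintype.card ι * L * ‖β‖ * dist x x₀ := by ring

lemma hasFDerivAt_sum_apply_mul (b : ι → ℝ) (β₀ : EuclideanSpace ℝ ι) :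
    HasFDerivAt (fun β : EuclideanSpace ℝ ι => ∑ j, β j * b j)
      (∑ j, b j • (EuclideanSpace.proj j : EuclideanSpace ℝ ι →L[ℝ] ℝ)) β₀ :=
  .fun_sum fun j _ =>
    (EuclideanSpace.proj j : EuclideanSpace ℝ ι →L[ℝ] ℝ).hasFDerivAt.mul_const (b j)

lemma hasFDerivAt_ctrans_sum {m d : ℕ} {lam L : ℝ} (hlam : 0 < lam) {F : ι → Zsp m d → ℝ}
    {z' : Zsp m d} (hF : ∀ j z, |F j z - F j z'| ≤ L * dist z z') :
    HasFDerivAt (fun β : EuclideanSpace ℝ ι => ctrans lam (fun z => ∑ j, β j * F j z) z')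
      (-∑ j, F j z' • (EuclideanSpace.proj j : EuclideanSpace ℝ ι →L[ℝ] ℝ)) 0 := by
  refine hasFDerivAt_iInf_cost_sub (K := Fintype.card ι * L) (a := min lam 1 / 2) (by positivity)
    (cost_self lam z') (mul_dist_sq_le_cost hlam.le · z')
    (hasFDerivAt_sum_apply_mul (F · z') 0) (.of_forall fun β z => ?_)
  rw [sub_zero]
  exact sum_mul_sub_sum_mul_le hF β z

theorem ctransform_hasDeriv_at_zero_general [DecidableEq ι] {m d : ℕ} {lam L : ℝ} (hlam : 0 < lam)
    {F : ι → Zsp m d → ℝ} {z' : Zsp m d} (hF : ∀ j z, |F j z - F j z'| ≤ L * dist z z') :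
    DifferentiableAt ℝ (fun β : EuclideanSpace ℝ ι =>
        ctrans lam (fun z => ∑ j, β j * F j z) z') 0 ∧
    ∀ j : ι,
      fderiv ℝ (fun β : EuclideanSpace ℝ ι =>
          ctrans lam (fun z => ∑ j, β j * F j z) z') 0 (EuclideanSpace.single j 1)
        = -F j z' := by
  have hderiv := hasFDerivAt_ctrans_sum hlam hF
  refine ⟨hderiv.differentiableAt, fun j => ?_⟩
  rw [hderiv.fderiv]
  simp [PiLp.single_apply]

end LinearCombination

/-- for fixed `z'`, the map `β ↦ φ_β^c(z')` is differentiable at `β = 0`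
with partial derivative `∂/∂β_j = −F_j(z')`. -/
theorem ctransform_hasDeriv_at_zero
    (m d p : ℕ) (lam L M : ℝ) (hlam : 0 < lam)
    (F : Fin p → Zsp m d → ℝ)
    (hC2 : ∀ j, ContDiff ℝ 2 (F j))
    (hL : ∀ j z, ‖fderiv ℝ (F j) z‖ ≤ L)
    (hM : ∀ j z, ‖fderiv ℝ (fderiv ℝ (F j)) z‖ ≤ M)
    (z' : Zsp m d) :
    DifferentiableAt ℝ (fun β : EuclideanSpace ℝ (Fin p) =>
        ctrans lam (fun z => ∑ j, β j * F j z) z') 0 ∧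
    ∀ j : Fin p,
      fderiv ℝ (fun β : EuclideanSpace ℝ (Fin p) =>
          ctrans lam (fun z => ∑ j, β j * F j z) z') 0 (EuclideanSpace.single j 1)
        = -F j z' := by
  exact ctransform_hasDeriv_at_zero_general hlam fun j z =>
    abs_sub_le_mul_dist_of_norm_fderiv_le ((hC2 j).differentiable two_ne_zero) (hL j) z z'
end
end

section
/- Let λ > 0, let F₁,…,F_p : ℝⁿ → ℝ (ℝⁿ = ℝᵐ × ℝᵈ) be twice continuously differentiable with ‖∇F_j(z)‖ ≤ L and ‖∇²F_j(z)‖ ≤ M for all z and j, set φ_β = Σ_{j=1}^p β_j F_j, fix points z¹,…,z^N and (z')¹,…,(z')^M in ℝⁿ, and define Ĵ(β) = (1/N) Σ_{i=1}^N φ_β(zⁱ) + (1/M) Σ_{i=1}^M φ_β^c((z')ⁱ). Set G_j = (1/N) Σ_i F_j(zⁱ) − (1/M) Σ_i F_j((z')ⁱ) and H_{jk} = (1/M) Σ_{i=1}^M ⟨∇F_j((z')ⁱ), ∇_λF_k((z')ⁱ)⟩. Then there exist δ > 0 and C ≥ 0 such that for all β with ‖β‖ ≤ δ, |Ĵ(β)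 − Σ_j β_j G_j + (1/2) Σ_{j,k} β_j β_k H_{jk}| ≤ C‖β‖³; in particular the Hessian in the second-order Taylor expansion of Ĵ at β = 0 is −H. -/
open scoped RealInnerProductSpace
open MeasureTheory

noncomputable section

/-! Write `φ` for `∑ β_j F_j` and `v` for `∇_λ φ(w)`. Completing the square turns
`c_λ(w + h, w) - φ(w + h)` into `-φ(w) - ⟨∇φ, ∇_λ φ⟩ / 2 + c_λ(h, v) - r(h)`, where `r` is the
first-order Taylor remainder of `φ` at `w` and `|r(h)| ≤ K ‖h‖²` with `K = O(‖β‖)`. Taking `h = v`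
shows that the infimum over `h` of `c_λ(h, v) - r(h)` is at most `K ‖v‖²`; conversely
`‖h‖² ≤ 2 ‖h - v‖² + 2 ‖v‖²`, and `c_λ(h, v)` absorbs `2 K ‖h - v‖²` once `K` is small, so the
infimum is at least `-2 K ‖v‖²`. Since `v = O(‖β‖)`, the error is `O(‖β‖³)`. -/

open Asymptotics Filter Topology
open scoped NNReal

lemma sum_mul_mul_sum_comm {ι κ R : Type*} [Fintype ι] [Fintype κ] [CommSemiring R]
    (a : ι → R) (c : R) (f : ι → κ → R) :
    ∑ j, a j * (c * ∑ i, f j i) = c * ∑ i, ∑ j, a j * f j i := by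
  rw [Finset.sum_comm, Finset.mul_sum]
  exact Finset.sum_congr rfl fun j _ ↦ by rw [← Finset.mul_sum]; ring

lemma exists_forall_norm_le_of_isBigO_norm_pow {E G : Type*} [SeminormedAddCommGroup E]
    [Norm G] {f : E → G} {n : ℕ} (hf : f =O[𝓝 0] fun x ↦ ‖x‖ ^ n) :
    ∃ δ > 0, ∃ C ≥ 0, ∀ x, ‖x‖ ≤ δ → ‖f x‖ ≤ C * ‖x‖ ^ n := by
  obtain ⟨C, hC, hbound⟩ := hf.exists_nonneg
  obtain ⟨δ, hδ, hball⟩ := Metric.nhds_basis_closedBall.eventually_iff.1 hbound.bound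
  exact ⟨δ, hδ, C, hC, fun x hx ↦ by simpa using hball (mem_closedBall_zero_iff.2 hx)⟩

section QuadraticRemainder

variable {E G : Type*} [NormedAddCommGroup E] [NormedSpace ℝ E]
  [NormedAddCommGroup G] [NormedSpace ℝ G]

/-- `f` agrees with the affine map `w + h ↦ f w + f' h` up to an error of at most `K ‖h‖²`. The
bound is required for every `h`, not only near `0`, because the `c`-transform is an infimum over
the whole space. -/
def HasQuadraticRemainderAt (K : ℝ≥0) (f : E → G) (f' : E →L[ℝ] G) (w : E) : Prop :=
  ∀ h, ‖f (w + h) - f w - f' h‖ ≤ K * ‖h‖ ^ 2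

namespace HasQuadraticRemainderAt

lemma hasFDerivAt {K : ℝ≥0} {f : E → G} {f' : E →L[ℝ] G} {w : E}
    (hf : HasQuadraticRemainderAt K f f' w) : HasFDerivAt f f' w := by
  have hquad : (fun h ↦ f (w + h) - f w - f' h) =O[𝓝 0] fun h ↦ ‖h‖ ^ 2 :=
    .of_bound K (.of_forall fun h ↦ by simpa using hf h)
  exact hasFDerivAt_iff_isLittleO_nhds_zero.2
    (hquad.trans_isLittleO (isLittleO_norm_pow_id one_lt_two))

lemma of_lipschitzWith_fderiv {K : ℝ≥0} {f : E → G} (hf : Differentiable ℝ f)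
    (hK : LipschitzWith K (fderiv ℝ f)) (w : E) :
    HasQuadraticRemainderAt K f (fderiv ℝ f w) w := by
  intro h
  have hderiv : ∀ z ∈ Metric.closedBall w ‖h‖, ‖fderiv ℝ f z - fderiv ℝ f w‖ ≤ K * ‖h‖ :=
    fun z hz ↦ (hK.norm_sub_le z w).trans (by gcongr; exact mem_closedBall_iff_norm.1 hz)
  have hmean := (convex_closedBall w ‖h‖).norm_image_sub_le_of_norm_fderiv_le'
    (fun z _ ↦ hf z) hderiv (Metric.mem_closedBall_self (norm_nonneg h))
    (show w + h ∈ Metric.closedBall w ‖h‖ by simp)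
  simpa only [add_sub_cancel_left, mul_assoc, ← sq] using hmean

lemma of_contDiff_two {f : E → G} {C : ℝ} (hf : ContDiff ℝ 2 f)
    (hC : ∀ z, ‖fderiv ℝ (fderiv ℝ f) z‖ ≤ C) (w : E) :
    HasQuadraticRemainderAt C.toNNReal f (fderiv ℝ f w) w := by
  have hf' : Differentiable ℝ (fderiv ℝ f) :=
    (hf.fderiv_right (m := 1) (by norm_num)).differentiable one_ne_zero
  exact of_lipschitzWith_fderiv (hf.differentiable two_ne_zero)
    (lipschitzWith_of_nnnorm_fderiv_le hf' fun z ↦ NNReal.le_toNNReal_of_coe_le (hC z)) w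

end HasQuadraticRemainderAt

variable {ι : Type*} [Fintype ι]

lemma norm_sum_smul_le_norm_mul_sum (β : EuclideanSpace ℝ ι) {v : ι → G} {r : ι → ℝ}
    (hv : ∀ j, ‖v j‖ ≤ r j) : ‖∑ j, β j • v j‖ ≤ ‖β‖ * ∑ j, r j := by
  rw [Finset.mul_sum]
  refine norm_sum_le_of_le _ fun j _ ↦ ?_
  rw [norm_smul]
  gcongr
  exacts [PiLp.norm_apply_le β j, hv j]

lemma HasQuadraticRemainderAt.sum_smul {K : ι → ℝ≥0} {f : ι → E → G} {f' : ι → E →L[ℝ] G} {w : E}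
    (hf : ∀ j, HasQuadraticRemainderAt (K j) (f j) (f' j) w) (β : EuclideanSpace ℝ ι) :
    HasQuadraticRemainderAt (‖β‖₊ * ∑ j, K j) (fun z ↦ ∑ j, β j • f j z) (∑ j, β j • f' j) w := by
  intro h
  calc ‖∑ j, β j • f j (w + h) - ∑ j, β j • f j w - (∑ j, β j • f' j) h‖
      = ‖∑ j, β j • (f j (w + h) - f j w - f' j h)‖ := by
        simp [smul_sub, Finset.sum_sub_distrib]
    _ ≤ ‖β‖ * ∑ j, K j * ‖h‖ ^ 2 := norm_sum_smul_le_norm_mul_sum β fun j ↦ hf j h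
    _ = (‖β‖₊ * ∑ j, K j : ℝ≥0) * ‖h‖ ^ 2 := by
        push_cast
        rw [← Finset.sum_mul, mul_assoc]

end QuadraticRemainder

lemma gradient_sum_mul {ι H : Type*} [Fintype ι] [NormedAddCommGroup H] [InnerProductSpace ℝ H]
    [CompleteSpace H] {f : ι → H → ℝ} {x : H} (hf : ∀ j, DifferentiableAt ℝ (f j) x)
    (b : ι → ℝ) : gradient (fun z ↦ ∑ j, b j * f j z) x = ∑ j, b j • gradient (f j) x := by
  have hsum := HasFDerivAt.fun_sum (u := Finset.univ)
    fun j _ ↦ (hf j).hasFDerivAt.const_mul (b j)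
  simp [gradient, hsum.fderiv]

section RescaledGradient

variable {m d : ℕ} {φ : Zsp m d → ℝ} {w : Zsp m d}

lemma fderiv_apply_eq_inner_gradY_add_inner_gradX (hφ : DifferentiableAt ℝ φ w) (h : Zsp m d) :
    fderiv ℝ φ w h = ⟪gradY φ w, h.1⟫ + ⟪gradX φ w, h.2⟫ := by
  have hY : HasFDerivAt (fun y ↦ φ (y, w.2)) (fderiv ℝ φ w ∘L .inl ℝ _ _) w.1 :=
    HasFDerivAt.comp (g := φ) w.1 hφ.hasFDerivAt (hasFDerivAt_prodMk_left w.1 w.2)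
  have hX : HasFDerivAt (fun x ↦ φ (w.1, x)) (fderiv ℝ φ w ∘L .inr ℝ _ _) w.2 :=
    HasFDerivAt.comp (g := φ) w.2 hφ.hasFDerivAt (hasFDerivAt_prodMk_right w.1 w.2)
  calc fderiv ℝ φ w h = fderiv ℝ φ w (h.1, 0) + fderiv ℝ φ w (0, h.2) := by simp [← map_add]
    _ = fderiv ℝ (fun y ↦ φ (y, w.2)) w.1 h.1 + fderiv ℝ (fun x ↦ φ (w.1, x)) w.2 h.2 := by
        rw [hY.fderiv, hX.fderiv]
        rfl
    _ = ⟪gradY φ w, h.1⟫ + ⟪gradX φ w, h.2⟫ := by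
        rw [gradY, gradX, inner_gradient_left, inner_gradient_left]

variable {ι : Type*} [Fintype ι] {F : ι → Zsp m d → ℝ}

lemma gradY_sum_mul (hF : ∀ j, DifferentiableAt ℝ (F j) w) (b : ι → ℝ) :
    gradY (fun z ↦ ∑ j, b j * F j z) w = ∑ j, b j • gradY (F j) w :=
  gradient_sum_mul (fun j ↦ (hF j).comp (f := fun y ↦ (y, w.2)) w.1 (by fun_prop)) b

lemma gradX_sum_mul (hF : ∀ j, DifferentiableAt ℝ (F j) w) (b : ι → ℝ) :
    gradX (fun z ↦ ∑ j, b j * F j z) w = ∑ j, b j • gradX (F j) w :=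
  gradient_sum_mul (fun j ↦ (hF j).comp (f := fun x ↦ (w.1, x)) w.2 (by fun_prop)) b

lemma gradLam_sum_mul (hF : ∀ j, DifferentiableAt ℝ (F j) w) (lam : ℝ) (b : ι → ℝ) :
    gradLam lam (fun z ↦ ∑ j, b j * F j z) w = ∑ j, b j • gradLam lam (F j) w := by
  rw [gradLam, gradY_sum_mul hF, gradX_sum_mul hF]
  ext1 <;> simp [gradLam, Prod.fst_sum, Prod.snd_sum, Finset.smul_sum, smul_comm lam⁻¹]

lemma innerLam_sum_mul (hF : ∀ j, DifferentiableAt ℝ (F j) w) (lam : ℝ) (b : ι → ℝ) :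
    innerLam lam (fun z ↦ ∑ j, b j * F j z) (fun z ↦ ∑ j, b j * F j z) w
      = ∑ j, ∑ k, b j * b k * innerLam lam (F j) (F k) w := by
  rw [innerLam, gradY_sum_mul hF, gradX_sum_mul hF, sum_inner, sum_inner]
  simp only [inner_sum, real_inner_smul_left, real_inner_smul_right, Finset.sum_div,
    ← Finset.sum_add_distrib]
  refine Finset.sum_congr rfl fun j _ ↦ Finset.sum_congr rfl fun k _ ↦ ?_
  rw [innerLam]
  ring

end RescaledGradient

section CTransform

variable {m d : ℕ} {lam : ℝ}

lemma half_min_mul_norm_sub_sq_le_cost (hlam : 0 ≤ lam) (z z' : Zsp m d) :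
    min lam 1 / 2 * ‖z - z'‖ ^ 2 ≤ cost lam z z' := by
  have hY : min lam 1 * ‖z.1 - z'.1‖ ^ 2 ≤ lam * ‖z.1 - z'.1‖ ^ 2 := by gcongr; exact min_le_left ..
  have hX : min lam 1 * ‖z.2 - z'.2‖ ^ 2 ≤ 1 * ‖z.2 - z'.2‖ ^ 2 := by gcongr; exact min_le_right ..
  have hY0 : 0 ≤ lam * ‖z.1 - z'.1‖ ^ 2 := by positivity
  have hX0 : 0 ≤ ‖z.2 - z'.2‖ ^ 2 := by positivity
  rw [cost, Prod.norm_def, Prod.fst_sub, Prod.snd_sub]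
  rcases max_choice ‖z.1 - z'.1‖ ‖z.2 - z'.2‖ with hmax | hmax <;> rw [hmax] <;> linarith

lemma cost_add_left_sub_fderiv (hlam : lam ≠ 0) {φ : Zsp m d → ℝ} {w : Zsp m d}
    (hφ : DifferentiableAt ℝ φ w) (h : Zsp m d) :
    cost lam (w + h) w - fderiv ℝ φ w h
      = cost lam h (gradLam lam φ w) - innerLam lam φ φ w / 2 := by
  rw [fderiv_apply_eq_inner_gradY_add_inner_gradX hφ]
  simp only [cost, gradLam, innerLam, Prod.fst_add, Prod.snd_add, add_sub_cancel_left,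
    norm_sub_sq_real, inner_smul_right, norm_smul, mul_pow, norm_inv, Real.norm_eq_abs, inv_pow,
    sq_abs, real_inner_self_eq_norm_sq, real_inner_comm]
  field_simp
  ring

lemma abs_ctrans_add_add_half_innerLam_le (hlam : 0 < lam) {K : ℝ≥0} {φ : Zsp m d → ℝ}
    {φ' : Zsp m d →L[ℝ] ℝ} {w : Zsp m d} (hφ : HasQuadraticRemainderAt K φ φ' w)
    (hK : 4 * K ≤ min lam 1) :
    |ctrans lam φ w + φ w + innerLam lam φ φ w / 2| ≤ 2 * K * ‖gradLam lam φ w‖ ^ 2 := by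
  obtain rfl := hφ.hasFDerivAt.fderiv
  set v := gradLam lam φ w
  have hsquare (h : Zsp m d) :
      cost lam (w + h) w - fderiv ℝ φ w h = cost lam h v - innerLam lam φ φ w / 2 :=
    cost_add_left_sub_fderiv hlam.ne' hφ.hasFDerivAt.differentiableAt h
  have hrem (h : Zsp m d) : -(K * ‖h‖ ^ 2) ≤ φ (w + h) - φ w - fderiv ℝ φ w h ∧
      φ (w + h) - φ w - fderiv ℝ φ w h ≤ K * ‖h‖ ^ 2 := abs_le.1 (hφ h)
  have hlow (z : Zsp m d) :
      -(φ w + innerLam lam φ φ w / 2) - 2 * K * ‖v‖ ^ 2 ≤ cost lam z w - φ z := by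
    obtain ⟨h, rfl⟩ : ∃ h, z = w + h := ⟨z - w, by simp⟩
    have hnorm : K * ‖h‖ ^ 2 ≤ K * (2 * (‖h - v‖ ^ 2 + ‖v‖ ^ 2)) := by
      gcongr
      calc ‖h‖ ^ 2 ≤ (‖h - v‖ + ‖v‖) ^ 2 := by gcongr; exact norm_le_norm_sub_add h v
        _ ≤ 2 * (‖h - v‖ ^ 2 + ‖v‖ ^ 2) := add_sq_le
    have habsorb : 4 * K * ‖h - v‖ ^ 2 ≤ min lam 1 * ‖h - v‖ ^ 2 := by gcongr
    linarith [hsquare h, (hrem h).2, half_min_mul_norm_sub_sq_le_cost hlam.le h v]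
  have hge : -(φ w + innerLam lam φ φ w / 2) - 2 * K * ‖v‖ ^ 2 ≤ ctrans lam φ w := le_ciInf hlow
  have hle : ctrans lam φ w ≤ cost lam (w + v) w - φ (w + v) :=
    ciInf_le ⟨_, Set.forall_mem_range.2 hlow⟩ (w + v)
  have hcost : cost lam v v = 0 := by simp [cost]
  have hKv : 0 ≤ K * ‖v‖ ^ 2 := by positivity
  rw [abs_le]
  constructor <;> linarith [hsquare v, (hrem v).1]

theorem isBigO_ctrans_sum_mul {ι : Type*} [Fintype ι] (hlam : 0 < lam) {K : ι → ℝ≥0}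
    {F : ι → Zsp m d → ℝ} {F' : ι → Zsp m d →L[ℝ] ℝ} {w : Zsp m d}
    (hF : ∀ j, HasQuadraticRemainderAt (K j) (F j) (F' j) w) :
    (fun β : EuclideanSpace ℝ ι ↦ ctrans lam (fun z ↦ ∑ j, β j * F j z) w + ∑ j, β j * F j w
        + (∑ j, ∑ k, β j * β k * innerLam lam (F j) (F k) w) / 2)
      =O[𝓝 0] fun β ↦ ‖β‖ ^ 3 := by
  have hdiff (j : ι) : DifferentiableAt ℝ (F j) w := (hF j).hasFDerivAt.differentiableAt
  set A : ℝ := ∑ j, ‖gradLam lam (F j) w‖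
  have hsmall : ∀ᶠ β : EuclideanSpace ℝ ι in 𝓝 0, 4 * (‖β‖ * ∑ j, (K j : ℝ)) < min lam 1 := by
    have hcont : Continuous fun β : EuclideanSpace ℝ ι ↦ 4 * (‖β‖ * ∑ j, (K j : ℝ)) := by fun_prop
    exact hcont.tendsto' 0 0 (by simp) |>.eventually_lt_const (lt_min hlam one_pos)
  refine .of_bound (2 * (∑ j, (K j : ℝ)) * A ^ 2) (hsmall.mono fun β hβ ↦ ?_)
  have hexp := abs_ctrans_add_add_half_innerLam_le hlam (.sum_smul hF β) (by exact_mod_cast hβ.le)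
  simp only [smul_eq_mul] at hexp
  rw [innerLam_sum_mul hdiff, gradLam_sum_mul hdiff] at hexp
  calc _ ≤ 2 * (‖β‖ * ∑ j, (K j : ℝ)) * ‖∑ j, β j • gradLam lam (F j) w‖ ^ 2 := by
        exact_mod_cast hexp
    _ ≤ 2 * (‖β‖ * ∑ j, (K j : ℝ)) * (‖β‖ * A) ^ 2 := by
        gcongr
        exact norm_sum_smul_le_norm_mul_sum β fun _ ↦ le_rfl
    _ = 2 * (∑ j, (K j : ℝ)) * A ^ 2 * ‖‖β‖ ^ 3‖ := by
        rw [norm_pow, norm_norm]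
        ring

end CTransform

theorem empirical_objective_second_order_expansion_general {ι : Type*} [Fintype ι]
    {m d N M : ℕ} {lam : ℝ} (hlam : 0 < lam) {F : ι → Zsp m d → ℝ}
    (zR : Fin N → Zsp m d) {zT : Fin M → Zsp m d} {K : ι → Fin M → ℝ≥0}
    {F' : ι → Fin M → Zsp m d →L[ℝ] ℝ}
    (hF : ∀ j i, HasQuadraticRemainderAt (K j i) (F j) (F' j i) (zT i)) :
    (fun β : EuclideanSpace ℝ ι ↦
      ((1 / N : ℝ) * ∑ i, (∑ j, β j * F j (zR i))
            + (1 / M : ℝ) * ∑ i, ctrans lam (fun z ↦ ∑ j, β j * F j z) (zT i))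
          - ∑ j, β j * ((1 / N : ℝ) * ∑ i, F j (zR i) - (1 / M : ℝ) * ∑ i, F j (zT i))
          + (1 / 2) * ∑ j, ∑ k, β j * β k *
              ((1 / M : ℝ) * ∑ i, innerLam lam (F j) (F k) (zT i)))
      =O[𝓝 0] fun β ↦ ‖β‖ ^ 3 := by
  have hsum := (IsBigO.fun_sum fun i (_ : i ∈ Finset.univ) ↦
    isBigO_ctrans_sum_mul hlam (hF · i)).const_mul_left (1 / M : ℝ)
  refine hsum.congr_left fun β ↦ ?_
  simp only [mul_sub, Finset.sum_sub_distrib, sum_mul_mul_sum_comm, ← Finset.mul_sum,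
    Finset.sum_add_distrib, ← Finset.sum_div]
  rw [Finset.sum_comm (f := fun i j ↦ ∑ k, β j * β k * innerLam lam (F j) (F k) (zT i))]
  ring

/-- second-order Taylor expansion of the empirical dual objective at `β = 0`:
`Ĵ(β) = Σ_j β_j G_j − (1/2) Σ_{j,k} β_j β_k H_{jk} + O(‖β‖³)` where
`G_j = (1/N) Σ_i F_j(zⁱ) − (1/M) Σ_i F_j((z')ⁱ)` and
`H_{jk} = (1/M) Σ_i ⟨∇F_j((z')ⁱ), ∇_λF_k((z')ⁱ)⟩`; in particular the Hessian is `−H`. -/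
theorem empirical_objective_second_order_expansion
    (m d p N M : ℕ) (lam L Mb : ℝ) (hlam : 0 < lam)
    (F : Fin p → Zsp m d → ℝ)
    (hC2 : ∀ j, ContDiff ℝ 2 (F j))
    (hL : ∀ j z, ‖fderiv ℝ (F j) z‖ ≤ L)
    (hMb : ∀ j z, ‖fderiv ℝ (fderiv ℝ (F j)) z‖ ≤ Mb)
    (zR : Fin N → Zsp m d) (zT : Fin M → Zsp m d) :
    ∃ δ > (0 : ℝ), ∃ C ≥ (0 : ℝ), ∀ β : EuclideanSpace ℝ (Fin p), ‖β‖ ≤ δ →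
      |((1 / N : ℝ) * ∑ i, (∑ j, β j * F j (zR i))
            + (1 / M : ℝ) * ∑ i, ctrans lam (fun z => ∑ j, β j * F j z) (zT i))
          - ∑ j, β j * ((1 / N : ℝ) * ∑ i, F j (zR i) - (1 / M : ℝ) * ∑ i, F j (zT i))
          + (1 / 2) * ∑ j, ∑ k, β j * β k *
              ((1 / M : ℝ) * ∑ i, innerLam lam (F j) (F k) (zT i))|
        ≤ C * ‖β‖ ^ 3 := by
  exact exists_forall_norm_le_of_isBigO_norm_pow <|
    empirical_objective_second_order_expansion_general hlam zR fun j i ↦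
      .of_contDiff_two (hC2 j) (hMb j) (zT i)
end
end

section
/- Let λ > 0, let ρ and μ be probability measures on ℝⁿ = ℝᵐ × ℝᵈ, and let ψ : ℝⁿ → ℝ be bounded and twice continuously differentiable with ‖∇ψ(z)‖ ≤ L and ‖∇²ψ(z)‖ ≤ M for all z. Define J(ε) = ∫ εψ dρ + ∫ (εψ)^c dμ. Then there exist δ > 0 and C ≥ 0 such that for all |ε| ≤ δ, |J(ε) − ε(∫ ψ dρ − ∫ ψ dμ) + (ε²/2) ∫ ⟨∇ψ(z), ∇_λψ(z)⟩ dμ(z)| ≤ C|ε|³. -/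
/-!
Let `φ = εψ`. Since `Dφ` is Lipschitz with constant of order `|ε|`, replacing `φ(w)` by its
first-order Taylor polynomial at `z` costs at most `κ c_λ(w, z)` with `κ = O(|ε|)`. The linearised
problem, minimising `c_λ(w, z) - Dφ(z)(w - z)`, has minimiser `w = z + ∇_λφ(z)` and value
`-⟨∇φ, ∇_λφ⟩ / 2`. Testing the infimum with this `w`, respectively giving up a fraction `κ` of the
cost and completing the square in the rest, yields
`-φ - ⟨∇φ, ∇_λφ⟩ / (2(1 - κ)) ≤ φ^c ≤ -φ - (1 - κ)⟨∇φ, ∇_λφ⟩ / 2`.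
As `⟨∇φ, ∇_λφ⟩ = ε²⟨∇ψ, ∇_λψ⟩`, the two bounds differ by `O(|ε|³)⟨∇ψ, ∇_λψ⟩`, which is integrated
against `μ`; the integrals against `ρ` cancel.
-/

open scoped RealInnerProductSpace
open MeasureTheory

noncomputable section

open Set
open scoped NNReal

section NormedSpace

variable {E F : Type*} [NormedAddCommGroup E] [NormedSpace ℝ E]
  [NormedAddCommGroup F] [NormedSpace ℝ F]

lemma norm_sub_sub_fderiv_le_of_lipschitzWith {f : E → F} {K : ℝ≥0} (hf : Differentiable ℝ f)
    (hK : LipschitzWith K (fderiv ℝ f)) (z w : E) :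
    ‖f w - f z - fderiv ℝ f z (w - z)‖ ≤ K / 2 * ‖w - z‖ ^ 2 := by
  set h := w - z
  have hderiv (t : ℝ) : HasDerivAt (fun t : ℝ => f (z + t • h) - f z - t • fderiv ℝ f z h)
      (fderiv ℝ f (z + t • h) h - fderiv ℝ f z h) t := by
    have hline : HasDerivAt (fun t : ℝ => z + t • h) h t := by
      simpa using ((hasDerivAt_id t).smul_const h).const_add z
    have hlin : HasDerivAt (fun t : ℝ => t • fderiv ℝ f z h) (fderiv ℝ f z h) t := by
      simpa using (hasDerivAt_id t).smul_const (fderiv ℝ f z h)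
    exact (((hf _).hasFDerivAt.comp_hasDerivAt t hline).sub_const (f z)).sub hlin
  have hbound (t : ℝ) (ht : t ∈ Ico (0 : ℝ) 1) :
      ‖fderiv ℝ f (z + t • h) h - fderiv ℝ f z h‖ ≤ K * ‖h‖ ^ 2 * t :=
    calc ‖fderiv ℝ f (z + t • h) h - fderiv ℝ f z h‖
        ≤ ‖fderiv ℝ f (z + t • h) - fderiv ℝ f z‖ * ‖h‖ :=
          (fderiv ℝ f (z + t • h) - fderiv ℝ f z).le_opNorm h
      _ ≤ K * ‖(z + t • h) - z‖ * ‖h‖ := by gcongr; exact hK.norm_sub_le _ _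
      _ = K * ‖h‖ ^ 2 * t := by
          rw [add_sub_cancel_left, norm_smul, Real.norm_of_nonneg ht.1]
          ring
  have hsq (t : ℝ) : HasDerivAt (fun t : ℝ => K * ‖h‖ ^ 2 * (t ^ 2 / 2)) (K * ‖h‖ ^ 2 * t) t := by
    simpa using (((hasDerivAt_id t).pow 2).div_const 2).const_mul (K * ‖h‖ ^ 2)
  have hle := image_norm_le_of_norm_deriv_right_le_deriv_boundary
    (fun t _ => (hderiv t).continuousAt.continuousWithinAt)
    (fun t _ => (hderiv t).hasDerivWithinAt) (by simp) hsq hbound (right_mem_Icc.2 zero_le_one)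
  calc ‖f w - f z - fderiv ℝ f z h‖ ≤ K * ‖h‖ ^ 2 * (1 ^ 2 / 2) := by simpa [h] using hle
    _ = K / 2 * ‖h‖ ^ 2 := by ring

end NormedSpace

lemma real_inner_le_mul_norm_sq_add_norm_sq_div {E : Type*} [NormedAddCommGroup E]
    [InnerProductSpace ℝ E] {s : ℝ} (hs : 0 < s) (g h : E) :
    ⟪g, h⟫ ≤ s / 2 * ‖h‖ ^ 2 + ‖g‖ ^ 2 / (2 * s) := by
  have hsquare : s / 2 * ‖h‖ ^ 2 + ‖g‖ ^ 2 / (2 * s) - ⟪g, h⟫ = ‖g - s • h‖ ^ 2 / (2 * s) := by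
    rw [norm_sub_sq_real, inner_smul_right, norm_smul, mul_pow, Real.norm_eq_abs, sq_abs]
    field_simp
    ring
  have hnonneg : 0 ≤ ‖g - s • h‖ ^ 2 / (2 * s) := by positivity
  linarith

section Zsp

variable {m d : ℕ} {lam κ : ℝ} {φ : Zsp m d → ℝ}

section Gradient

lemma gradY_eq_toDual_symm {z : Zsp m d} (hφ : DifferentiableAt ℝ φ z) :
    gradY φ z = (InnerProductSpace.toDual ℝ _).symm
      ((fderiv ℝ φ z).comp (ContinuousLinearMap.inl ℝ _ _)) := by
  have hslice : HasFDerivAt (fun y => φ (y, z.2))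
      ((fderiv ℝ φ z).comp (ContinuousLinearMap.inl ℝ _ _)) z.1 :=
    HasFDerivAt.comp z.1 hφ.hasFDerivAt (hasFDerivAt_prodMk_left z.1 z.2)
  rw [gradY, gradient, hslice.fderiv]

lemma gradX_eq_toDual_symm {z : Zsp m d} (hφ : DifferentiableAt ℝ φ z) :
    gradX φ z = (InnerProductSpace.toDual ℝ _).symm
      ((fderiv ℝ φ z).comp (ContinuousLinearMap.inr ℝ _ _)) := by
  have hslice : HasFDerivAt (fun x => φ (z.1, x))
      ((fderiv ℝ φ z).comp (ContinuousLinearMap.inr ℝ _ _)) z.2 :=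
    HasFDerivAt.comp z.2 hφ.hasFDerivAt (hasFDerivAt_prodMk_right z.1 z.2)
  rw [gradX, gradient, hslice.fderiv]

lemma fderiv_eq_inner_gradY_add_inner_gradX {z : Zsp m d} (hφ : DifferentiableAt ℝ φ z)
    (h : Zsp m d) : fderiv ℝ φ z h = ⟪gradY φ z, h.1⟫ + ⟪gradX φ z, h.2⟫ := by
  rw [gradY_eq_toDual_symm hφ, gradX_eq_toDual_symm hφ, InnerProductSpace.toDual_symm_apply,
    InnerProductSpace.toDual_symm_apply]
  simp [← map_add]

lemma norm_gradY_le {z : Zsp m d} (hφ : DifferentiableAt ℝ φ z) :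
    ‖gradY φ z‖ ≤ ‖fderiv ℝ φ z‖ := by
  rw [gradY_eq_toDual_symm hφ, LinearIsometryEquiv.norm_map]
  refine ContinuousLinearMap.opNorm_le_bound _ (norm_nonneg _) fun v => ?_
  simpa [Prod.norm_def] using (fderiv ℝ φ z).le_opNorm (v, 0)

lemma norm_gradX_le {z : Zsp m d} (hφ : DifferentiableAt ℝ φ z) :
    ‖gradX φ z‖ ≤ ‖fderiv ℝ φ z‖ := by
  rw [gradX_eq_toDual_symm hφ, LinearIsometryEquiv.norm_map]
  refine ContinuousLinearMap.opNorm_le_bound _ (norm_nonneg _) fun v => ?_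
  simpa [Prod.norm_def] using (fderiv ℝ φ z).le_opNorm (0, v)

lemma continuous_gradY (hφ : ContDiff ℝ 1 φ) : Continuous (gradY φ) := by
  simp only [funext fun z => gradY_eq_toDual_symm (hφ.differentiable one_ne_zero z)]
  exact (LinearIsometryEquiv.continuous _).comp
    ((hφ.continuous_fderiv one_ne_zero).clm_comp continuous_const)

lemma continuous_gradX (hφ : ContDiff ℝ 1 φ) : Continuous (gradX φ) := by
  simp only [funext fun z => gradX_eq_toDual_symm (hφ.differentiable one_ne_zero z)]
  exact (LinearIsometryEquiv.continuous _).comp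
    ((hφ.continuous_fderiv one_ne_zero).clm_comp continuous_const)

lemma innerLam_self (lam : ℝ) (φ : Zsp m d → ℝ) (z : Zsp m d) :
    innerLam lam φ φ z = ‖gradY φ z‖ ^ 2 / lam + ‖gradX φ z‖ ^ 2 := by
  simp only [innerLam, real_inner_self_eq_norm_sq]

lemma innerLam_self_nonneg (hlam : 0 ≤ lam) (φ : Zsp m d → ℝ) (z : Zsp m d) :
    0 ≤ innerLam lam φ φ z := by
  rw [innerLam_self]
  positivity

lemma innerLam_self_le (hlam : 0 ≤ lam) {z : Zsp m d} (hφ : DifferentiableAt ℝ φ z) :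
    innerLam lam φ φ z ≤ (lam⁻¹ + 1) * ‖fderiv ℝ φ z‖ ^ 2 :=
  calc innerLam lam φ φ z = ‖gradY φ z‖ ^ 2 / lam + ‖gradX φ z‖ ^ 2 := innerLam_self lam φ z
    _ ≤ ‖fderiv ℝ φ z‖ ^ 2 / lam + ‖fderiv ℝ φ z‖ ^ 2 := by
        gcongr
        exacts [norm_gradY_le hφ, norm_gradX_le hφ]
    _ = (lam⁻¹ + 1) * ‖fderiv ℝ φ z‖ ^ 2 := by ring

lemma innerLam_const_mul_self {z : Zsp m d} (hφ : DifferentiableAt ℝ φ z) (c : ℝ) :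
    innerLam lam (fun w => c * φ w) (fun w => c * φ w) z = c ^ 2 * innerLam lam φ φ z := by
  simp only [innerLam_self, gradY_eq_toDual_symm hφ, gradX_eq_toDual_symm hφ,
    gradY_eq_toDual_symm (hφ.const_mul c), gradX_eq_toDual_symm (hφ.const_mul c),
    fderiv_const_mul hφ, ContinuousLinearMap.smul_comp, LinearIsometryEquiv.norm_map, norm_smul,
    mul_pow, Real.norm_eq_abs, sq_abs]
  ring

lemma continuous_innerLam_self (lam : ℝ) (hφ : ContDiff ℝ 1 φ) :
    Continuous (innerLam lam φ φ) := by
  have hY := continuous_gradY hφ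
  have hX := continuous_gradX hφ
  simp only [funext (innerLam_self lam φ)]
  fun_prop

lemma integrable_innerLam_self {L : ℝ} {μ : Measure (Zsp m d)} [IsFiniteMeasure μ]
    (hlam : 0 ≤ lam) (hφ : ContDiff ℝ 1 φ) (hL : ∀ z, ‖fderiv ℝ φ z‖ ≤ L) :
    Integrable (innerLam lam φ φ) μ := by
  refine Integrable.of_bound (continuous_innerLam_self lam hφ).aestronglyMeasurable
    ((lam⁻¹ + 1) * L ^ 2) (ae_of_all _ fun z => ?_)
  rw [Real.norm_of_nonneg (innerLam_self_nonneg hlam φ z)]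
  refine (innerLam_self_le hlam (hφ.differentiable one_ne_zero z)).trans ?_
  gcongr
  exact hL z

end Gradient

section Cost

lemma min_div_two_mul_norm_sub_sq_le_cost (hlam : 0 ≤ lam) (w z : Zsp m d) :
    min lam 1 / 2 * ‖w - z‖ ^ 2 ≤ cost lam w z := by
  have hY : 0 ≤ lam * ‖w.1 - z.1‖ ^ 2 := by positivity
  have hX : 0 ≤ ‖w.2 - z.2‖ ^ 2 := by positivity
  have hlamY : min lam 1 * ‖w.1 - z.1‖ ^ 2 ≤ lam * ‖w.1 - z.1‖ ^ 2 := by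
    gcongr
    exact min_le_left _ _
  have honeX : min lam 1 * ‖w.2 - z.2‖ ^ 2 ≤ 1 * ‖w.2 - z.2‖ ^ 2 := by
    gcongr
    exact min_le_right _ _
  rw [cost, Prod.norm_def, Prod.fst_sub, Prod.snd_sub]
  rcases max_choice ‖w.1 - z.1‖ ‖w.2 - z.2‖ with hmax | hmax <;> rw [hmax] <;> linarith

lemma abs_sub_sub_fderiv_le_cost (hlam : 0 < lam) {K : ℝ≥0} (hφ : Differentiable ℝ φ)
    (hK : LipschitzWith K (fderiv ℝ φ)) (z w : Zsp m d) :
    |φ w - φ z - fderiv ℝ φ z (w - z)| ≤ K / min lam 1 * cost lam w z := by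
  have : 0 < min lam 1 := lt_min hlam one_pos
  calc |φ w - φ z - fderiv ℝ φ z (w - z)| ≤ K / 2 * ‖w - z‖ ^ 2 :=
        norm_sub_sub_fderiv_le_of_lipschitzWith hφ hK z w
    _ = K / min lam 1 * (min lam 1 / 2 * ‖w - z‖ ^ 2) := by field_simp
    _ ≤ K / min lam 1 * cost lam w z := by
        gcongr
        exact min_div_two_mul_norm_sub_sq_le_cost hlam.le w z

lemma fderiv_le_mul_cost_add_innerLam_div (hlam : 0 < lam) {s : ℝ} (hs : 0 < s) {z : Zsp m d}
    (hφ : DifferentiableAt ℝ φ z) (w : Zsp m d) :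
    fderiv ℝ φ z (w - z) ≤ s * cost lam w z + innerLam lam φ φ z / (2 * s) := by
  have hY := real_inner_le_mul_norm_sq_add_norm_sq_div (mul_pos hs hlam) (gradY φ z) (w.1 - z.1)
  have hX := real_inner_le_mul_norm_sq_add_norm_sq_div hs (gradX φ z) (w.2 - z.2)
  rw [fderiv_eq_inner_gradY_add_inner_gradX hφ]
  refine (add_le_add hY hX).trans_eq ?_
  rw [cost, innerLam_self]
  field_simp
  ring

lemma cost_add_gradLam (hlam : lam ≠ 0) (φ : Zsp m d → ℝ) (z : Zsp m d) :
    cost lam (z + gradLam lam φ z) z = innerLam lam φ φ z / 2 := by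
  simp only [cost, gradLam, innerLam_self, Prod.fst_add, Prod.snd_add, add_sub_cancel_left,
    norm_smul, mul_pow, Real.norm_eq_abs, sq_abs]
  field_simp

lemma fderiv_gradLam {z : Zsp m d} (hφ : DifferentiableAt ℝ φ z) :
    fderiv ℝ φ z (gradLam lam φ z) = innerLam lam φ φ z := by
  rw [fderiv_eq_inner_gradY_add_inner_gradX hφ, gradLam, innerLam, inner_smul_right]
  ring

end Cost

section CTransform

section Pointwise

variable {z : Zsp m d} (hlam : 0 < lam) (hφ : DifferentiableAt ℝ φ z)
  (hrem : ∀ w, |φ w - φ z - fderiv ℝ φ z (w - z)| ≤ κ * cost lam w z)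
include hlam hφ hrem

lemma neg_sub_innerLam_div_le_cost_sub (hκ : κ < 1) (w : Zsp m d) :
    -φ z - innerLam lam φ φ z / (2 * (1 - κ)) ≤ cost lam w z - φ w := by
  have hlinear := fderiv_le_mul_cost_add_innerLam_div hlam (sub_pos.2 hκ) hφ w
  have hremainder := (abs_le.1 (hrem w)).2
  linarith

lemma bddBelow_range_cost_sub (hκ : κ < 1) : BddBelow (range fun w => cost lam w z - φ w) :=
  ⟨_, forall_mem_range.2 (neg_sub_innerLam_div_le_cost_sub hlam hφ hrem hκ)⟩

lemma neg_sub_innerLam_div_le_ctrans (hκ : κ < 1) :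
    -φ z - innerLam lam φ φ z / (2 * (1 - κ)) ≤ ctrans lam φ z :=
  le_ciInf (neg_sub_innerLam_div_le_cost_sub hlam hφ hrem hκ)

lemma ctrans_le_neg_sub_mul_innerLam (hκ : κ < 1) :
    ctrans lam φ z ≤ -φ z - (1 - κ) / 2 * innerLam lam φ φ z := by
  have htest := ciInf_le (bddBelow_range_cost_sub hlam hφ hrem hκ) (z + gradLam lam φ z)
  have hremainder := (abs_le.1 (hrem (z + gradLam lam φ z))).1
  rw [cost_add_gradLam hlam.ne'] at htest hremainder
  rw [add_sub_cancel_left, fderiv_gradLam hφ] at hremainder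
  rw [ctrans]
  linarith

lemma abs_ctrans_add_add_innerLam_le (hκ₀ : 0 ≤ κ) (hκ : κ ≤ 1 / 2) :
    |ctrans lam φ z + φ z + innerLam lam φ φ z / 2| ≤ κ * innerLam lam φ φ z := by
  have hκ₁ : κ < 1 := by linarith
  have hlower := neg_sub_innerLam_div_le_ctrans hlam hφ hrem hκ₁
  have hupper := ctrans_le_neg_sub_mul_innerLam hlam hφ hrem hκ₁
  have hnonneg := innerLam_self_nonneg hlam.le φ z
  have hdiv : innerLam lam φ φ z / (2 * (1 - κ)) ≤ innerLam lam φ φ z * (1 / 2 + κ) := by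
    rw [div_le_iff₀ (by linarith), mul_assoc]
    refine le_mul_of_one_le_right hnonneg ?_
    nlinarith
  rw [abs_le]
  constructor <;> linarith [mul_nonneg hκ₀ hnonneg]

end Pointwise

lemma measurable_ctrans (hbdd : ∀ z, BddBelow (range fun w => cost lam w z - φ w)) :
    Measurable (ctrans lam φ) := by
  refine (upperSemicontinuous_ciInf hbdd fun w => Continuous.upperSemicontinuous ?_).measurable
  unfold cost
  fun_prop

section Integral

variable {μ : Measure (Zsp m d)} (hlam : 0 < lam) (hφ : Differentiable ℝ φ)
  (hrem : ∀ z w, |φ w - φ z - fderiv ℝ φ z (w - z)| ≤ κ * cost lam w z)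
  (hκ₀ : 0 ≤ κ) (hκ : κ ≤ 1 / 2) (hφμ : Integrable φ μ) (hq : Integrable (innerLam lam φ φ) μ)
include hlam hφ hrem hκ₀ hκ hφμ hq

lemma integrable_ctrans : Integrable (ctrans lam φ) μ := by
  have hmeas : Measurable (ctrans lam φ) := measurable_ctrans fun z =>
    bddBelow_range_cost_sub hlam (hφ z) (hrem z) (by linarith)
  have herror : Integrable (fun z => ctrans lam φ z + φ z + innerLam lam φ φ z / 2) μ :=
    (hq.const_mul κ).mono' ((hmeas.aestronglyMeasurable.add hφμ.1).add (hq.div_const 2).1)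
      (ae_of_all _ fun z => abs_ctrans_add_add_innerLam_le hlam (hφ z) (hrem z) hκ₀ hκ)
  refine ((herror.sub (hq.div_const 2)).sub hφμ).congr (ae_of_all _ fun z => ?_)
  simp only [Pi.sub_apply]
  ring

lemma abs_integral_ctrans_add_add_integral_innerLam_le :
    |∫ z, ctrans lam φ z ∂μ + ∫ z, φ z ∂μ + (∫ z, innerLam lam φ φ z ∂μ) / 2|
      ≤ κ * ∫ z, innerLam lam φ φ z ∂μ := by
  have hctrans := integrable_ctrans hlam hφ hrem hκ₀ hκ hφμ hq
  have hsum : Integrable (fun z => ctrans lam φ z + φ z) μ := hctrans.add hφμ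
  rw [← integral_add hctrans hφμ, ← integral_div, ← integral_add hsum (hq.div_const 2),
    ← integral_const_mul, ← Real.norm_eq_abs]
  exact norm_integral_le_of_norm_le (hq.const_mul κ)
    (ae_of_all _ fun z => abs_ctrans_add_add_innerLam_le hlam (hφ z) (hrem z) hκ₀ hκ)

end Integral

lemma abs_integral_ctrans_const_mul_add_le {ψ : Zsp m d → ℝ} {K : ℝ≥0} {μ : Measure (Zsp m d)}
    (hlam : 0 < lam) (hψ : Differentiable ℝ ψ) (hK : LipschitzWith K (fderiv ℝ ψ))
    (hψμ : Integrable ψ μ) (hq : Integrable (innerLam lam ψ ψ) μ) {ε : ℝ}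
    (hε : |ε| * (K / min lam 1) ≤ 1 / 2) :
    |∫ z, ctrans lam (fun w => ε * ψ w) z ∂μ + ε * ∫ z, ψ z ∂μ
        + ε ^ 2 / 2 * ∫ z, innerLam lam ψ ψ z ∂μ|
      ≤ K / min lam 1 * (∫ z, innerLam lam ψ ψ z ∂μ) * |ε| ^ 3 := by
  have : 0 < min lam 1 := lt_min hlam one_pos
  have hsmul := funext fun z => innerLam_const_mul_self (lam := lam) (hψ z) ε
  have hrem (z w : Zsp m d) :
      |ε * ψ w - ε * ψ z - fderiv ℝ (fun w => ε * ψ w) z (w - z)|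
        ≤ |ε| * (K / min lam 1) * cost lam w z := by
    rw [fderiv_const_mul (hψ z), smul_apply, smul_eq_mul, ← mul_sub,
      ← mul_sub, abs_mul, mul_assoc]
    gcongr
    exact abs_sub_sub_fderiv_le_cost hlam hψ hK z w
  have hbound := abs_integral_ctrans_add_add_integral_innerLam_le hlam (hψ.const_mul ε) hrem
    (by positivity) hε (hψμ.const_mul ε) (hsmul ▸ hq.const_mul (ε ^ 2))
  rw [hsmul, integral_const_mul, integral_const_mul] at hbound
  convert hbound using 1
  · congr 1
    ring
  · rw [← sq_abs ε]
    ring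

end CTransform

theorem dual_objective_second_order_expansion_general {ρ μ : Measure (Zsp m d)}
    {ψ : Zsp m d → ℝ} {K : ℝ≥0} (hlam : 0 < lam) (hψρ : Integrable ψ ρ) (hψμ : Integrable ψ μ)
    (hq : Integrable (innerLam lam ψ ψ) μ) (hψ : Differentiable ℝ ψ)
    (hK : LipschitzWith K (fderiv ℝ ψ)) :
    ∃ δ > (0 : ℝ), ∃ C ≥ (0 : ℝ), ∀ ε : ℝ, |ε| ≤ δ →
      |(∫ z, ε * ψ z ∂ρ + ∫ z', ctrans lam (fun z => ε * ψ z) z' ∂μ)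
          - ε * (∫ z, ψ z ∂ρ - ∫ z, ψ z ∂μ)
          + (ε ^ 2 / 2) * ∫ z, innerLam lam ψ ψ z ∂μ|
        ≤ C * |ε| ^ 3 := by
  have : 0 < min lam 1 := lt_min hlam one_pos
  have hq₀ : 0 ≤ ∫ z, innerLam lam ψ ψ z ∂μ :=
    integral_nonneg (innerLam_self_nonneg hlam.le ψ)
  have : 0 ≤ K / min lam 1 := by positivity
  set κ : ℝ := K / min lam 1
  refine ⟨1 / (2 * (κ + 1)), by positivity, κ * ∫ z, innerLam lam ψ ψ z ∂μ, by positivity,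
    fun ε hε => ?_⟩
  have hsmall : |ε| * κ ≤ 1 / 2 := by
    rw [le_div_iff₀ (by positivity)] at hε
    linarith [abs_nonneg ε]
  rw [integral_const_mul_of_integrable hψρ]
  convert abs_integral_ctrans_const_mul_add_le hlam hψ hK hψμ hq hsmall using 2
  ring

end Zsp

/-- second-order Taylor expansion of
`J(ε) = ∫ εψ dρ + ∫ (εψ)^c dμ` at `ε = 0` with third-order remainder:
`|J(ε) − ε(∫ψdρ − ∫ψdμ) + (ε²/2)∫⟨∇ψ, ∇_λψ⟩dμ| ≤ C|ε|³`. -/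
theorem dual_objective_second_order_expansion
    (m d : ℕ) (lam L M B : ℝ) (hlam : 0 < lam)
    (ρ μ : Measure (Zsp m d)) [IsProbabilityMeasure ρ] [IsProbabilityMeasure μ]
    (ψ : Zsp m d → ℝ)
    (hB : ∀ z, |ψ z| ≤ B)
    (hC2 : ContDiff ℝ 2 ψ)
    (hL : ∀ z, ‖fderiv ℝ ψ z‖ ≤ L)
    (hM : ∀ z, ‖fderiv ℝ (fderiv ℝ ψ) z‖ ≤ M) :
    ∃ δ > (0 : ℝ), ∃ C ≥ (0 : ℝ), ∀ ε : ℝ, |ε| ≤ δ →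
      |(∫ z, ε * ψ z ∂ρ + ∫ z', ctrans lam (fun z => ε * ψ z) z' ∂μ)
          - ε * (∫ z, ψ z ∂ρ - ∫ z, ψ z ∂μ)
          + (ε ^ 2 / 2) * ∫ z, innerLam lam ψ ψ z ∂μ|
        ≤ C * |ε| ^ 3 := by
  have hM₀ : 0 ≤ M := (norm_nonneg (fderiv ℝ (fderiv ℝ ψ) 0)).trans (hM 0)
  have hψ : Continuous ψ := hC2.continuous
  have hDψ : Differentiable ℝ (fderiv ℝ ψ) :=
    (hC2.fderiv_right (m := 1) (by norm_num)).differentiable one_ne_zero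
  exact dual_objective_second_order_expansion_general (K := ⟨M, hM₀⟩) hlam
    (.of_bound hψ.aestronglyMeasurable B (ae_of_all _ hB))
    (.of_bound hψ.aestronglyMeasurable B (ae_of_all _ hB))
    (integrable_innerLam_self hlam.le (hC2.of_le one_le_two) hL)
    (hC2.differentiable two_ne_zero) (lipschitzWith_of_nnnorm_fderiv_le hDψ hM)
end
end

section
/- Let μ be a probability measure on ℝᵐ × ℝᵈ with first marginal μ_Y, let π be a probability measure on ℝᵈ, and let T^X : ℝᵐ × ℝᵈ → ℝᵈ be measurable. If the block-triangular map T(y,x) = (y, T^X(y,x)) pushes forward the product measure μ_Y ⊗ π to μ (i.e., T_♯(μ_Y ⊗ π) = μ), then for μ_Y-almost every y, the pushforward of π under the map x ↦ T^X(y,x) equals the conditional distribution μ(·|y). -/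
open MeasureTheory

/-!
Pushing `ν ⊗ κ` forward along a block-triangular map leaves the first coordinate alone, so the
result is disintegrated over the same `ν` by the slicewise pushforwards `y ↦ T^X(y, ·)_♯ κ(y)`.
Disintegrations being almost everywhere unique, these are the conditional distributions.
-/

open ProbabilityTheory

section

variable {α β γ : Type*} [MeasurableSpace α] [MeasurableSpace β] [MeasurableSpace γ]
  {f : α × β → γ}

/-- The kernel of slicewise pushforwards `a ↦ f(a, ·)_♯ κ(a)`. It is encoded as the pushforward
under `f` of the kernel `a ↦ δ_a ⊗ κ(a)`, which makes it measurable in `a`;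
its value is `0` unless `κ` is s-finite and `f` is measurable. -/
noncomputable def sliceMap (κ : Kernel α β) (f : α × β → γ) : Kernel α γ :=
  (Kernel.id ×ₖ κ).map f

instance (κ : Kernel α β) [IsFiniteKernel κ] : IsFiniteKernel (sliceMap κ f) := by
  unfold sliceMap
  infer_instance

instance (κ : Kernel α β) : IsSFiniteKernel (sliceMap κ f) := by
  unfold sliceMap
  infer_instance

theorem sliceMap_apply (κ : Kernel α β) [IsSFiniteKernel κ] (hf : Measurable f) (a : α) :
    sliceMap κ f a = (κ a).map fun b => f (a, b) := by
  rw [sliceMap, Kernel.map_apply _ hf, Kernel.prod_apply, Kernel.id_apply, Measure.dirac_prod,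
    Measure.map_map hf measurable_prodMk_left, Function.comp_def]

theorem map_compProd_eq_compProd_sliceMap (ν : Measure α) [SFinite ν] (κ : Kernel α β)
    [IsSFiniteKernel κ] (hf : Measurable f) :
    (ν ⊗ₘ κ).map (fun z => (z.1, f z)) = ν ⊗ₘ sliceMap κ f := by
  have hT : Measurable fun z => (z.1, f z) := measurable_fst.prodMk hf
  ext s hs
  rw [Measure.map_apply hT hs, Measure.compProd_apply (hT hs), Measure.compProd_apply hs]
  refine lintegral_congr fun a => ?_
  rw [sliceMap_apply κ hf, Measure.map_apply (by fun_prop) (measurable_prodMk_left hs)]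
  simp only [Set.preimage_preimage]

theorem blockTriangular_pushforward_conditional_general [StandardBorelSpace γ] [Nonempty γ]
    (μ : Measure (α × γ)) [IsFiniteMeasure μ] (κ : Kernel α β) [IsFiniteKernel κ]
    (hf : Measurable f) (hpush : (μ.fst ⊗ₘ κ).map (fun z => (z.1, f z)) = μ) :
    ∀ᵐ a ∂μ.fst, (κ a).map (fun b => f (a, b)) = μ.condKernel a := by
  have hμ : μ = μ.fst ⊗ₘ sliceMap κ f :=
    hpush.symm.trans (map_compProd_eq_compProd_sliceMap μ.fst κ hf)
  filter_upwards [eq_condKernel_of_measure_eq_compProd _ hμ] with a ha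
  rw [← sliceMap_apply κ hf, ha]

end

/-- if the block-triangular map `T(y,x) = (y, T^X(y,x))` pushes forward the
product measure `μ_Y ⊗ π` to `μ`, then for `μ_Y`-almost every `y` the pushforward of `π`
under `x ↦ T^X(y,x)` equals the conditional distribution `μ(·|y)`. -/
theorem blockTriangular_pushforward_conditional
    (m d : ℕ)
    (μ : Measure (EuclideanSpace ℝ (Fin m) × EuclideanSpace ℝ (Fin d)))
    [IsProbabilityMeasure μ]
    (π : Measure (EuclideanSpace ℝ (Fin d))) [IsProbabilityMeasure π]
    (TX : EuclideanSpace ℝ (Fin m) × EuclideanSpace ℝ (Fin d) → EuclideanSpace ℝ (Fin d))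
    (hTX : Measurable TX)
    (hpush : Measure.map (fun z => (z.1, TX z)) (μ.fst.prod π) = μ) :
    ∀ᵐ y ∂μ.fst, Measure.map (fun x => TX (y, x)) π = μ.condKernel y := by
  rw [← Measure.compProd_const] at hpush
  exact blockTriangular_pushforward_conditional_general μ (Kernel.const _ π) hTX hpush
end

section
/- Let μ be a probability measure on ℝᵐ × ℝᵈ with first marginal μ_Y, let π be a probability measure on ℝᵈ, and let T₁^X,…,T_K^X : ℝᵐ × ℝᵈ → ℝᵈ be measurable maps; set T_t(y,x) = (y, T_t^X(y,x)) and T = T_K ∘ ⋯ ∘ T₁. If T_♯(μ_Y ⊗ π) = μ, then for μ_Y-almost every y, the pushforward of π under the composed map x ↦ T_K^X(y, T_{K−1}^X(y, …, T₁^X(y,x)…)) equals the conditional distribution μ(·|y). -/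
/-!
A composition of block-triangular maps is block-triangular: it sends `(y, x)` to `(y, f (y, x))`.
Such a map acts on each fibre separately, so it pushes `ν ⊗ₘ η` forward to `ν ⊗ₘ κ` with
`κ y = (f (y, ·))_♯ (η y)`. When this pushforward is `ρ` and `ν = ρ.fst`, `κ` disintegrates `ρ`, and
disintegrations are unique up to null sets.
-/

open MeasureTheory

/-- The composed block-triangular map `T = T_K ∘ ⋯ ∘ T₁`, where `T_t(y,x) = (y, T_t^X(y,x))`,
applied by folding over `t = 1, …, K`. -/
def compT {m d K : ℕ}
    (TX : Fin K → EuclideanSpace ℝ (Fin m) × EuclideanSpace ℝ (Fin d) →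
      EuclideanSpace ℝ (Fin d))
    (z : EuclideanSpace ℝ (Fin m) × EuclideanSpace ℝ (Fin d)) :
    EuclideanSpace ℝ (Fin m) × EuclideanSpace ℝ (Fin d) :=
  (List.finRange K).foldl (fun w t => (w.1, TX t w)) z

/-- The composed second component `x ↦ T_K^X(y, T_{K−1}^X(y, …, T₁^X(y,x)…))`. -/
def compTX {m d K : ℕ}
    (TX : Fin K → EuclideanSpace ℝ (Fin m) × EuclideanSpace ℝ (Fin d) →
      EuclideanSpace ℝ (Fin d))
    (y : EuclideanSpace ℝ (Fin m)) (x : EuclideanSpace ℝ (Fin d)) :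
    EuclideanSpace ℝ (Fin d) :=
  (List.finRange K).foldl (fun x t => TX t (y, x)) x

open ProbabilityTheory

section TriangularMap

variable {α β γ : Type*} {mα : MeasurableSpace α} {mβ : MeasurableSpace β}
  {mγ : MeasurableSpace γ}

lemma id_prod_map_apply (η : Kernel α β) [IsSFiniteKernel η] {f : α × β → γ}
    (hf : Measurable f) (a : α) :
    (Kernel.id ×ₖ η).map f a = (η a).map (fun x => f (a, x)) := by
  rw [Kernel.map_apply _ hf, Kernel.prod_apply, Kernel.id_apply, Measure.dirac_prod,
    Measure.map_map hf measurable_prodMk_left]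
  rfl

lemma map_fst_prodMk_compProd (ν : Measure α) [SFinite ν] (η : Kernel α β) [IsSFiniteKernel η]
    {f : α × β → γ} (hf : Measurable f) :
    (ν ⊗ₘ η).map (fun z => (z.1, f z)) = ν ⊗ₘ (Kernel.id ×ₖ η).map f := by
  have hT : Measurable fun z : α × β => (z.1, f z) := measurable_fst.prodMk hf
  ext s hs
  rw [Measure.map_apply hT hs, Measure.compProd_apply (hT hs), Measure.compProd_apply hs]
  refine lintegral_congr fun a => ?_
  have hfa : Measurable fun x => f (a, x) := hf.comp measurable_prodMk_left
  rw [id_prod_map_apply η hf, Measure.map_apply hfa (measurable_prodMk_left hs)]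
  rfl

lemma ae_map_eq_condKernel_of_map_fst_prodMk_compProd [StandardBorelSpace γ] [Nonempty γ]
    {ρ : Measure (α × γ)} [IsFiniteMeasure ρ] (η : Kernel α β) [IsFiniteKernel η]
    {f : α × β → γ} (hf : Measurable f)
    (hρ : (ρ.fst ⊗ₘ η).map (fun z => (z.1, f z)) = ρ) :
    ∀ᵐ a ∂ρ.fst, (η a).map (fun x => f (a, x)) = ρ.condKernel a := by
  have hdisint : ρ = ρ.fst ⊗ₘ (Kernel.id ×ₖ η).map f :=
    hρ.symm.trans (map_fst_prodMk_compProd ρ.fst η hf)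
  filter_upwards [eq_condKernel_of_measure_eq_compProd _ hdisint] with a ha
  rw [← id_prod_map_apply η hf, ha]

end TriangularMap

section Composition

variable {ι α β : Type*}

lemma foldl_fst_prodMk (l : List ι) (F : ι → α × β → β) (z : α × β) :
    l.foldl (fun w i => (w.1, F i w)) z = (z.1, l.foldl (fun x i => F i (z.1, x)) z.2) := by
  induction l generalizing z with
  | nil => rfl
  | cons i l ih => simp only [List.foldl_cons, ih]

lemma measurable_foldl {mβ : MeasurableSpace β} (l : List ι) {G : β → ι → β}
    (hG : ∀ i, Measurable fun b => G b i) : Measurable (l.foldl G) := by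
  induction l with
  | nil => exact measurable_id
  | cons i l ih => exact ih.comp (hG i)

variable {mα : MeasurableSpace α} {mβ : MeasurableSpace β}

lemma measurable_foldl_fst_prodMk (l : List ι) {F : ι → α × β → β}
    (hF : ∀ i, Measurable (F i)) :
    Measurable fun z : α × β => l.foldl (fun x i => F i (z.1, x)) z.2 := by
  have hT : Measurable (l.foldl fun (w : α × β) i => (w.1, F i w)) :=
    measurable_foldl l fun i => measurable_fst.prodMk (hF i)
  simpa only [foldl_fst_prodMk] using hT.snd

theorem composed_blockTriangular_pushforward_conditional_general
    [StandardBorelSpace β] [Nonempty β] {ρ : Measure (α × β)} [IsFiniteMeasure ρ]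
    (η : Kernel α β) [IsFiniteKernel η] (l : List ι) {F : ι → α × β → β}
    (hF : ∀ i, Measurable (F i))
    (hρ : (ρ.fst ⊗ₘ η).map (l.foldl fun w i => (w.1, F i w)) = ρ) :
    ∀ᵐ a ∂ρ.fst, (η a).map (l.foldl fun x i => F i (a, x)) = ρ.condKernel a := by
  refine ae_map_eq_condKernel_of_map_fst_prodMk_compProd η (measurable_foldl_fst_prodMk l hF) ?_
  simpa only [foldl_fst_prodMk] using hρ

end Composition

/-- if the composition `T = T_K ∘ ⋯ ∘ T₁` of block-triangular maps
`T_t(y,x) = (y, T_t^X(y,x))` pushes forward `μ_Y ⊗ π` to `μ`, then for `μ_Y`-almost every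
`y` the pushforward of `π` under the composed map
`x ↦ T_K^X(y, T_{K−1}^X(y, …, T₁^X(y,x)…))` equals the conditional distribution `μ(·|y)`. -/
theorem composed_blockTriangular_pushforward_conditional
    (m d K : ℕ)
    (μ : Measure (EuclideanSpace ℝ (Fin m) × EuclideanSpace ℝ (Fin d)))
    [IsProbabilityMeasure μ]
    (π : Measure (EuclideanSpace ℝ (Fin d))) [IsProbabilityMeasure π]
    (TX : Fin K → EuclideanSpace ℝ (Fin m) × EuclideanSpace ℝ (Fin d) →
      EuclideanSpace ℝ (Fin d))
    (hTX : ∀ t, Measurable (TX t))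
    (hpush : Measure.map (compT TX) (μ.fst.prod π) = μ) :
    ∀ᵐ y ∂μ.fst, Measure.map (compTX TX y) π = μ.condKernel y :=
  composed_blockTriangular_pushforward_conditional_general (Kernel.const _ π) (List.finRange K) hTX
    (by rwa [Measure.compProd_const])
end

section
/- Let λ > 0 and write points of ℝⁿ = ℝᵐ × ℝᵈ as z = (y,x). Let φ : ℝⁿ → ℝ be differentiable with ‖∇φ(z)‖ ≤ L for all z. Then for every z' ∈ ℝⁿ the infimum defining the c-transform φ^c(z') = inf_z (c_λ(z,z') − φ(z)) is attained at some z̄ ∈ ℝⁿ, and every global minimizer z̄ = (ȳ, x̄) satisfies ‖ȳ − y'‖ ≤ L/λ and ‖x̄ − x'‖ ≤ L, hence ‖z̄ − z'‖ ≤ L(1 + 1/λ). -/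
/-!
The bound on the derivative makes `φ` Lipschitz, so the cost, which grows quadratically, dominates
it at infinity and the infimum is attained. At a minimizer, moving one block of coordinates a
fraction `t` of the way towards `z'` lowers the cost by `a r² (t - t² / 2)`, where `r` is the
distance in that block and `a` its weight, while `φ` changes by at most `L t r`; letting `t → 0`
gives `a r ≤ L`.
-/

open scoped RealInnerProductSpace
open MeasureTheory

noncomputable section

open Filter Topology
open scoped NNReal

lemma tendsto_sub_cocompact_atTop_of_sq_dist_le {X : Type*} [PseudoMetricSpace X] [ProperSpace X]
    {c φ : X → ℝ} {μ : ℝ} {K : ℝ≥0} (hμ : 0 < μ) {x₀ : X}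
    (hc : ∀ x, μ * dist x x₀ ^ 2 ≤ c x) (hφ : LipschitzWith K φ) :
    Tendsto (fun x => c x - φ x) (cocompact X) atTop := by
  have hquad : Tendsto (fun r : ℝ => r * (μ * r - K) - φ x₀) atTop atTop :=
    tendsto_atTop_add_const_right _ _ <| tendsto_id.atTop_mul_atTop₀ <|
      tendsto_atTop_add_const_right _ _ <| tendsto_id.const_mul_atTop hμ
  refine tendsto_atTop_mono (fun x => ?_) (hquad.comp (tendsto_dist_right_cocompact_atTop x₀))
  have hφx : φ x ≤ φ x₀ + K * dist x x₀ := hφ.le_add_mul x x₀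
  calc dist x x₀ * (μ * dist x x₀ - K) - φ x₀
      = μ * dist x x₀ ^ 2 - (φ x₀ + K * dist x x₀) := by ring
    _ ≤ c x - φ x := sub_le_sub (hc x) hφx

lemma mul_norm_sub_le_of_forall_sq_norm_sub_sub_le {E : Type*} [SeminormedAddCommGroup E]
    [NormedSpace ℝ E] {a : ℝ} {K : ℝ≥0} {φ : E → ℝ} (hφ : LipschitzWith K φ) {x x' : E}
    (hx : ∀ z, a * ‖x - x'‖ ^ 2 / 2 - φ x ≤ a * ‖z - x'‖ ^ 2 / 2 - φ z) :
    a * ‖x - x'‖ ≤ K := by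
  rcases (norm_nonneg (x - x')).eq_or_lt with hr | hr
  · simp [← hr]
  set r := ‖x - x'‖
  have hslide : ∀ t ∈ Set.Ioc (0 : ℝ) 1, a * r * (1 - t / 2) ≤ K := by
    rintro t ⟨ht₀, ht₁⟩
    let w := AffineMap.lineMap x x' t
    have hwx' : ‖w - x'‖ = (1 - t) * r := by
      rw [← dist_eq_norm, dist_lineMap_right, Real.norm_of_nonneg (sub_nonneg.2 ht₁), dist_eq_norm]
    have hxw : dist x w = t * r := by
      rw [dist_left_lineMap, Real.norm_of_nonneg ht₀.le, dist_eq_norm]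
    have hφxw : φ x ≤ φ w + K * (t * r) := hxw ▸ hφ.le_add_mul x w
    have hmin : a * r ^ 2 / 2 - φ x ≤ a * ((1 - t) * r) ^ 2 / 2 - φ w := hwx' ▸ hx w
    refine le_of_mul_le_mul_right ?_ (mul_pos ht₀ hr)
    linear_combination hφxw + hmin
  have hlim : Tendsto (fun t : ℝ => a * r * (1 - t / 2)) (𝓝[>] 0) (𝓝 (a * r)) := by
    have hcont : Continuous fun t : ℝ => a * r * (1 - t / 2) := by fun_prop
    simpa using (hcont.tendsto 0).mono_left nhdsWithin_le_nhds
  exact le_of_tendsto hlim (eventually_of_mem (Ioc_mem_nhdsGT one_pos) hslide)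

section WeightedCost

variable {E F : Type*} [SeminormedAddCommGroup E] [SeminormedAddCommGroup F] {lam : ℝ}

/-- The weighted quadratic cost `c_λ` on a product of two arbitrary seminormed groups; `cost` is
the Euclidean case. -/
def weightedCost (lam : ℝ) (z z' : E × F) : ℝ :=
  (lam * ‖z.1 - z'.1‖ ^ 2 + ‖z.2 - z'.2‖ ^ 2) / 2

lemma continuous_weightedCost_left (z' : E × F) : Continuous fun z => weightedCost lam z z' := by
  unfold weightedCost
  fun_prop

lemma min_div_two_mul_sq_dist_le_weightedCost (hlam : 0 ≤ lam) (z z' : E × F) :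
    min lam 1 / 2 * dist z z' ^ 2 ≤ weightedCost lam z z' := by
  have hfst : min lam 1 * ‖z.1 - z'.1‖ ^ 2 ≤ lam * ‖z.1 - z'.1‖ ^ 2 :=
    mul_le_mul_of_nonneg_right (min_le_left _ _) (sq_nonneg _)
  have hsnd : min lam 1 * ‖z.2 - z'.2‖ ^ 2 ≤ ‖z.2 - z'.2‖ ^ 2 :=
    mul_le_of_le_one_left (sq_nonneg _) (min_le_right _ _)
  have hfst₀ : 0 ≤ lam * ‖z.1 - z'.1‖ ^ 2 := by positivity
  have hsnd₀ : 0 ≤ ‖z.2 - z'.2‖ ^ 2 := sq_nonneg _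
  rw [dist_eq_norm, Prod.norm_def, Prod.fst_sub, Prod.snd_sub, weightedCost]
  rcases max_choice ‖z.1 - z'.1‖ ‖z.2 - z'.2‖ with h | h <;> rw [h] <;> linarith

variable {K : ℝ≥0} {φ : E × F → ℝ} {z' zbar : E × F}

lemma exists_forall_weightedCost_sub_le [ProperSpace E] [ProperSpace F] (hlam : 0 < lam)
    (hφ : LipschitzWith K φ) (z' : E × F) :
    ∃ zbar, ∀ z, weightedCost lam zbar z' - φ zbar ≤ weightedCost lam z z' - φ z :=
  ((continuous_weightedCost_left z').sub hφ.continuous).exists_forall_le <|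
    tendsto_sub_cocompact_atTop_of_sq_dist_le (by positivity)
      (min_div_two_mul_sq_dist_le_weightedCost hlam.le · z') hφ

lemma mul_norm_fst_sub_le_of_forall_weightedCost_sub_le [NormedSpace ℝ E]
    (hφ : LipschitzWith K φ)
    (hmin : ∀ z, weightedCost lam zbar z' - φ zbar ≤ weightedCost lam z z' - φ z) :
    lam * ‖zbar.1 - z'.1‖ ≤ K := by
  have hφ₁ : LipschitzWith K fun y => φ (y, zbar.2) := by
    simpa only [mul_one, Function.comp_def] using hφ.comp (LipschitzWith.prodMk_right zbar.2)
  refine mul_norm_sub_le_of_forall_sq_norm_sub_sub_le hφ₁ fun y => ?_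
  have hy := hmin (y, zbar.2)
  simp only [weightedCost] at hy
  linarith

lemma norm_snd_sub_le_of_forall_weightedCost_sub_le [NormedSpace ℝ F]
    (hφ : LipschitzWith K φ)
    (hmin : ∀ z, weightedCost lam zbar z' - φ zbar ≤ weightedCost lam z z' - φ z) :
    ‖zbar.2 - z'.2‖ ≤ K := by
  have hφ₂ : LipschitzWith K fun x => φ (zbar.1, x) := by
    simpa only [mul_one, Function.comp_def] using hφ.comp (LipschitzWith.prodMk_left zbar.1)
  rw [← one_mul ‖zbar.2 - z'.2‖]
  refine mul_norm_sub_le_of_forall_sq_norm_sub_sub_le hφ₂ fun x => ?_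
  have hx := hmin (zbar.1, x)
  simp only [weightedCost] at hx
  linarith

theorem ctransform_attained_and_minimizer_bounds_general
    [NormedSpace ℝ E] [NormedSpace ℝ F] [ProperSpace E] [ProperSpace F]
    (hlam : 0 < lam) (hφ : LipschitzWith K φ) (z' : E × F) :
    (∃ zbar, (⨅ z, weightedCost lam z z' - φ z) = weightedCost lam zbar z' - φ zbar ∧
        ∀ z, weightedCost lam zbar z' - φ zbar ≤ weightedCost lam z z' - φ z) ∧
    ∀ zbar,
      (∀ z, weightedCost lam zbar z' - φ zbar ≤ weightedCost lam z z' - φ z) →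
        ‖zbar.1 - z'.1‖ ≤ K / lam ∧ ‖zbar.2 - z'.2‖ ≤ K ∧
        ‖zbar - z'‖ ≤ K * (1 + 1 / lam) := by
  refine ⟨?_, fun zbar hmin => ?_⟩
  · obtain ⟨zbar, hmin⟩ := exists_forall_weightedCost_sub_le hlam hφ z'
    exact ⟨zbar, IsLeast.csInf_eq ⟨Set.mem_range_self zbar, Set.forall_mem_range.2 hmin⟩, hmin⟩
  · have hfst : ‖zbar.1 - z'.1‖ ≤ K / lam :=
      (le_div_iff₀' hlam).2 (mul_norm_fst_sub_le_of_forall_weightedCost_sub_le hφ hmin)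
    have hsnd : ‖zbar.2 - z'.2‖ ≤ K := norm_snd_sub_le_of_forall_weightedCost_sub_le hφ hmin
    refine ⟨hfst, hsnd, ?_⟩
    calc ‖zbar - z'‖ ≤ max (K / lam) K := max_le_max hfst hsnd
      _ ≤ K + K / lam := max_le (le_add_of_nonneg_left K.2) (le_add_of_nonneg_right (by positivity))
      _ = K * (1 + 1 / lam) := by ring

end WeightedCost

/-- for `φ` differentiable with `‖∇φ‖ ≤ L`, the infimum defining the
c-transform is attained, and every global minimizer `z̄ = (ȳ,x̄)` satisfies
`‖ȳ − y'‖ ≤ L/λ`, `‖x̄ − x'‖ ≤ L`, hence `‖z̄ − z'‖ ≤ L(1 + 1/λ)`. -/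
theorem ctransform_attained_and_minimizer_bounds
    (m d : ℕ) (lam L : ℝ) (hlam : 0 < lam)
    (φ : Zsp m d → ℝ) (hφ : Differentiable ℝ φ)
    (hL : ∀ z, ‖fderiv ℝ φ z‖ ≤ L)
    (z' : Zsp m d) :
    (∃ zbar : Zsp m d,
        ctrans lam φ z' = cost lam zbar z' - φ zbar ∧
        ∀ z : Zsp m d, cost lam zbar z' - φ zbar ≤ cost lam z z' - φ z) ∧
    ∀ zbar : Zsp m d,
      (∀ z : Zsp m d, cost lam zbar z' - φ zbar ≤ cost lam z z' - φ z) →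
        ‖zbar.1 - z'.1‖ ≤ L / lam ∧ ‖zbar.2 - z'.2‖ ≤ L ∧
        ‖zbar - z'‖ ≤ L * (1 + 1 / lam) := by
  lift L to ℝ≥0 using (norm_nonneg _).trans (hL z')
  exact ctransform_attained_and_minimizer_bounds_general hlam
    (lipschitzWith_of_nnnorm_fderiv_le hφ hL) z'
end
end

section
/- Let λ > 0 and let F₁,…,F_p : ℝⁿ → ℝ (ℝⁿ = ℝᵐ × ℝᵈ) be twice continuously differentiable with ‖∇F_j(z)‖ ≤ L and ‖∇²F_j(z)‖ ≤ M for all z and j, and set φ_β = Σ_{j=1}^p β_j F_j. Then there exist δ > 0 and C ≥ 0 such that for every β with ‖β‖ ≤ δ, every z' ∈ ℝⁿ, and every global minimizer z̄ of z ↦ c_λ(z,z') − φ_β(z), one has |φ_β(z̄) − φ_β(z') − Σ_{j,k} β_j β_k ⟨∇F_j(z'), ∇_λF_k(z')⟩| ≤ C‖β‖³. -/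
/-!
Let `a` be the bilinear form whose quadratic form is twice the cost, so that `a` is symmetric and
coercive with some constant `κ`, and let `φ = ∑ j, β j * F j`. A minimizer `z̄` is a critical point,
that is, `a (z̄ - z') = Dφ(z̄)`, while the rescaled gradient `w = ∇_λ φ(z')` is characterized by
`a w = Dφ(z')`. If `φ` is `A`-Lipschitz and `Dφ` is `B`-Lipschitz, coercivity applied to these two
identities and to their difference gives `‖z̄ - z'‖ ≤ A / κ` and `‖z̄ - z' - w‖ ≤ B ‖z̄ - z'‖ / κ`.
Hence `φ(z̄) - φ(z') = Dφ(z') (z̄ - z') + O(B ‖z̄ - z'‖²) = Dφ(z') w + O(A² B / κ²)`, where `A` and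
`B` are `O(‖β‖)` and `Dφ(z') w` is the quadratic term of the expansion.
-/

open scoped RealInnerProductSpace
open MeasureTheory

noncomputable section

open scoped NNReal

section Lipschitz

lemma lipschitzWith_sum_smul {ι α E : Type*} [Fintype ι] [PseudoMetricSpace α]
    [SeminormedAddCommGroup E] [NormedSpace ℝ E] {f : ι → α → E} {K : ℝ≥0}
    (hf : ∀ j, LipschitzWith K (f j)) (β : EuclideanSpace ℝ ι) :
    LipschitzWith (Fintype.card ι * K * ‖β‖₊) fun x => ∑ j, β j • f j x := by
  refine LipschitzWith.of_dist_le_mul fun x y => ?_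
  calc dist (∑ j, β j • f j x) (∑ j, β j • f j y)
      ≤ ∑ j, dist (β j • f j x) (β j • f j y) := dist_sum_sum_le _ _ _
    _ ≤ ∑ _j : ι, ‖β‖ * (K * dist x y) := by
        gcongr with j
        rw [dist_smul₀]
        gcongr
        · exact PiLp.norm_apply_le β j
        · exact (hf j).dist_le_mul x y
    _ = ↑(Fintype.card ι * K * ‖β‖₊) * dist x y := by
        simp only [Finset.sum_const, Finset.card_univ, nsmul_eq_mul, NNReal.coe_mul,
          NNReal.coe_natCast, coe_nnnorm]
        ring

variable {E G : Type*} [NormedAddCommGroup E] [NormedSpace ℝ E] [NormedAddCommGroup G]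
  [NormedSpace ℝ G]

lemma lipschitzWith_toNNReal_of_norm_fderiv_le {f : E → G} (hf : Differentiable ℝ f) {C : ℝ}
    (hC : ∀ x, ‖fderiv ℝ f x‖ ≤ C) : LipschitzWith C.toNNReal f :=
  lipschitzWith_of_nnnorm_fderiv_le hf fun x => NNReal.le_toNNReal_of_coe_le (hC x)

lemma norm_sub_sub_fderiv_le_of_lipschitzWith_fderiv {f : E → G} (hf : Differentiable ℝ f)
    {B : ℝ≥0} (hB : LipschitzWith B (fderiv ℝ f)) (x₀ x : E) :
    ‖f x - f x₀ - fderiv ℝ f x₀ (x - x₀)‖ ≤ B * ‖x - x₀‖ ^ 2 := by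
  have hderiv : ∀ y ∈ Metric.closedBall x₀ ‖x - x₀‖,
      ‖fderiv ℝ f y - fderiv ℝ f x₀‖ ≤ B * ‖x - x₀‖ := fun y hy => by
    rw [mem_closedBall_iff_norm] at hy
    exact (hB.norm_sub_le y x₀).trans (by gcongr)
  calc ‖f x - f x₀ - fderiv ℝ f x₀ (x - x₀)‖ ≤ B * ‖x - x₀‖ * ‖x - x₀‖ :=
        (convex_closedBall x₀ ‖x - x₀‖).norm_image_sub_le_of_norm_fderiv_le'
          (fun y _ => hf y) hderiv (by simp) (by simp [dist_eq_norm])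
    _ = B * ‖x - x₀‖ ^ 2 := by ring

end Lipschitz

section BilinearForm

variable {E : Type*} [NormedAddCommGroup E] [NormedSpace ℝ E] {a : E →L[ℝ] E →L[ℝ] ℝ}

lemma norm_le_norm_apply_div_of_coercive {κ : ℝ} (hκ : 0 < κ)
    (ha : ∀ v, κ * ‖v‖ * ‖v‖ ≤ a v v) (v : E) : ‖v‖ ≤ ‖a v‖ / κ := by
  rw [le_div_iff₀' hκ]
  rcases (norm_nonneg v).eq_or_lt with hv | hv
  · simp [← hv]
  · exact le_of_mul_le_mul_right ((ha v).trans ((le_abs_self _).trans ((a v).le_opNorm v))) hv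

lemma hasFDerivAt_half_apply_sub_self (hsymm : ∀ u v, a u v = a v u) (z' z : E) :
    HasFDerivAt (fun z => a (z - z') (z - z') / 2) (a (z - z')) z := by
  have hsub : HasFDerivAt (fun z => z - z') (ContinuousLinearMap.id ℝ E) z :=
    (hasFDerivAt_id z).sub_const z'
  have hquad := ((a.hasFDerivAt.comp z hsub).clm_apply hsub).mul_const (2⁻¹ : ℝ)
  refine hquad.congr_fderiv ?_
  ext v
  simp only [Function.comp_apply, ContinuousLinearMap.comp_id, smul_add, add_apply, smul_apply,
    smul_eq_mul, ContinuousLinearMap.flip_apply, hsymm v]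
  ring

/-- When `a` is symmetric, `hzbar` says that `zbar` is critical for
`z ↦ a (z - z') (z - z') / 2 - φ z`; by `hw`, `w` is the gradient of `φ` at `z'` with respect to
`a`. -/
lemma abs_sub_sub_fderiv_le_of_coercive {κ : ℝ} (hκ : 0 < κ)
    (ha : ∀ v, κ * ‖v‖ * ‖v‖ ≤ a v v) {φ : E → ℝ} (hφ : Differentiable ℝ φ) {A B : ℝ≥0}
    (hA : LipschitzWith A φ) (hB : LipschitzWith B (fderiv ℝ φ)) {z' zbar w : E}
    (hzbar : a (zbar - z') = fderiv ℝ φ zbar) (hw : a w = fderiv ℝ φ z') :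
    |φ zbar - φ z' - fderiv ℝ φ z' w| ≤ 2 * A ^ 2 * B / κ ^ 2 := by
  have hA' (z : E) : ‖fderiv ℝ φ z‖ ≤ A := norm_fderiv_le_of_lipschitz ℝ hA
  have hdispl : ‖zbar - z'‖ ≤ A / κ := by
    refine (norm_le_norm_apply_div_of_coercive hκ ha _).trans ?_
    rw [hzbar]
    gcongr
    exact hA' zbar
  have hdispl_sub : ‖zbar - z' - w‖ ≤ B * (A / κ) / κ := by
    refine (norm_le_norm_apply_div_of_coercive hκ ha _).trans ?_
    rw [map_sub a (zbar - z') w, hzbar, hw]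
    gcongr
    exact (hB.norm_sub_le zbar z').trans (by gcongr)
  calc |φ zbar - φ z' - fderiv ℝ φ z' w|
      = ‖(φ zbar - φ z' - fderiv ℝ φ z' (zbar - z')) + fderiv ℝ φ z' (zbar - z' - w)‖ := by
        rw [map_sub (fderiv ℝ φ z') (zbar - z') w, Real.norm_eq_abs, sub_add_sub_cancel]
    _ ≤ B * ‖zbar - z'‖ ^ 2 + A * ‖zbar - z' - w‖ :=
        norm_add_le_of_le (norm_sub_sub_fderiv_le_of_lipschitzWith_fderiv hφ hB z' zbar)
          ((fderiv ℝ φ z').le_of_opNorm_le (hA' z') _)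
    _ ≤ B * (A / κ) ^ 2 + A * (B * (A / κ) / κ) := by gcongr
    _ = 2 * A ^ 2 * B / κ ^ 2 := by ring

/-- The vector `g k` is the gradient of `F k` at `z'` with respect to `a`; it equals
`gradLam lam (F k) z'` when `a = weightedForm lam`. -/
theorem minimizer_potential_expansion_general {ι : Type*} [Fintype ι] (ha : IsCoercive a)
    (hsymm : ∀ u v, a u v = a v u) {F : ι → E → ℝ} (hF : ∀ j, Differentiable ℝ (F j)) {L M : ℝ≥0}
    (hL : ∀ j, LipschitzWith L (F j)) (hM : ∀ j, LipschitzWith M (fderiv ℝ (F j))) :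
    ∃ C ≥ (0 : ℝ), ∀ (β : EuclideanSpace ℝ ι) (z' zbar : E),
      fderiv ℝ (fun z => a (z - z') (z - z') / 2 - ∑ j, β j * F j z) zbar = 0 →
        ∀ g : ι → E, (∀ k, a (g k) = fderiv ℝ (F k) z') →
          |(∑ j, β j * F j zbar) - (∑ j, β j * F j z')
              - ∑ j, ∑ k, β j * β k * fderiv ℝ (F j) z' (g k)|
            ≤ C * ‖β‖ ^ 3 := by
  obtain ⟨κ, hκ, hcoer⟩ := ha
  set N : ℝ := (Fintype.card ι : ℝ)
  refine ⟨2 * (N * L) ^ 2 * (N * M) / κ ^ 2, by positivity, fun β z' zbar hcrit g hg => ?_⟩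
  set φ : E → ℝ := fun z => ∑ j, β j * F j z
  have hφ (z : E) : HasFDerivAt φ (∑ j, β j • fderiv ℝ (F j) z) z :=
    HasFDerivAt.fun_sum fun j _ => (hF j z).hasFDerivAt.const_mul (β j)
  have hDφ : fderiv ℝ φ = fun z => ∑ j, β j • fderiv ℝ (F j) z := funext fun z => (hφ z).fderiv
  have hzbar : a (zbar - z') = fderiv ℝ φ zbar := by
    rw [(hφ zbar).fderiv, ← sub_eq_zero, ← hcrit]
    exact ((hasFDerivAt_half_apply_sub_self hsymm z' zbar).sub (hφ zbar)).fderiv.symm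
  have hw : a (∑ k, β k • g k) = fderiv ℝ φ z' := by
    simp only [hDφ, map_sum, map_smul, hg]
  have hquad : fderiv ℝ φ z' (∑ k, β k • g k)
      = ∑ j, ∑ k, β j * β k * fderiv ℝ (F j) z' (g k) := by
    simp only [hDφ, sum_apply, smul_apply]
    simp only [map_sum, map_smul, smul_eq_mul, Finset.mul_sum, mul_assoc]
  rw [← hquad]
  calc |φ zbar - φ z' - fderiv ℝ φ z' (∑ k, β k • g k)|
      ≤ 2 * ↑(Fintype.card ι * L * ‖β‖₊) ^ 2 * ↑(Fintype.card ι * M * ‖β‖₊) / κ ^ 2 :=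
        abs_sub_sub_fderiv_le_of_coercive hκ hcoer (fun z => (hφ z).differentiableAt)
          (lipschitzWith_sum_smul hL β) (hDφ ▸ lipschitzWith_sum_smul hM β) hzbar hw
    _ = 2 * (N * L) ^ 2 * (N * M) / κ ^ 2 * ‖β‖ ^ 3 := by
        push_cast
        ring

end BilinearForm

section WeightedForm

variable {E₁ E₂ : Type*} [NormedAddCommGroup E₁] [InnerProductSpace ℝ E₁]
  [NormedAddCommGroup E₂] [InnerProductSpace ℝ E₂]

/-- The weighted inner product `lam ⟪y, y'⟫ + ⟪x, x'⟫` on `E₁ × E₂`, as a continuous bilinear form.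
It plays the role of the Hessian of `cost lam`; the norm of `E₁ × E₂` is the sup norm. -/
def weightedForm (lam : ℝ) : E₁ × E₂ →L[ℝ] E₁ × E₂ →L[ℝ] ℝ :=
  lam • (innerSL ℝ).bilinearComp (.fst ℝ E₁ E₂) (.fst ℝ E₁ E₂)
    + (innerSL ℝ).bilinearComp (.snd ℝ E₁ E₂) (.snd ℝ E₁ E₂)

lemma weightedForm_apply (lam : ℝ) (u v : E₁ × E₂) :
    weightedForm lam u v = lam * ⟪u.1, v.1⟫ + ⟪u.2, v.2⟫ := by
  simp [weightedForm]

lemma weightedForm_comm (lam : ℝ) (u v : E₁ × E₂) :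
    weightedForm lam u v = weightedForm lam v u := by
  simp only [weightedForm_apply, real_inner_comm]

lemma isCoercive_weightedForm {lam : ℝ} (hlam : 0 < lam) :
    IsCoercive (weightedForm lam : E₁ × E₂ →L[ℝ] E₁ × E₂ →L[ℝ] ℝ) := by
  refine ⟨min lam 1, lt_min hlam one_pos, fun v => ?_⟩
  rw [weightedForm_apply, real_inner_self_eq_norm_mul_norm, real_inner_self_eq_norm_mul_norm,
    mul_assoc]
  rcases max_choice ‖v.1‖ ‖v.2‖ with hmax | hmax <;> rw [Prod.norm_def, hmax]
  · calc min lam 1 * (‖v.1‖ * ‖v.1‖) ≤ lam * (‖v.1‖ * ‖v.1‖) := by gcongr; exact min_le_left _ _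
      _ ≤ lam * (‖v.1‖ * ‖v.1‖) + ‖v.2‖ * ‖v.2‖ := le_add_of_nonneg_right (by positivity)
  · calc min lam 1 * (‖v.2‖ * ‖v.2‖) ≤ 1 * (‖v.2‖ * ‖v.2‖) := by gcongr; exact min_le_right _ _
      _ ≤ lam * (‖v.1‖ * ‖v.1‖) + ‖v.2‖ * ‖v.2‖ := by
        rw [one_mul]
        exact le_add_of_nonneg_left (by positivity)

end WeightedForm

section WeightedCost

variable {m d : ℕ} {F : Zsp m d → ℝ} {z : Zsp m d}

lemma cost_eq_weightedForm (lam : ℝ) (z z' : Zsp m d) :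
    cost lam z z' = weightedForm lam (z - z') (z - z') / 2 := by
  simp only [cost, weightedForm_apply, Prod.fst_sub, Prod.snd_sub, real_inner_self_eq_norm_sq]

lemma inner_gradY (hF : DifferentiableAt ℝ F z) (u : EuclideanSpace ℝ (Fin m)) :
    ⟪gradY F z, u⟫ = fderiv ℝ F z (u, 0) := by
  have hslice : HasFDerivAt (fun y => F (y, z.2)) (fderiv ℝ F z ∘L .inl ℝ _ _) z.1 :=
    HasFDerivAt.comp (g := F) z.1 hF.hasFDerivAt (hasFDerivAt_prodMk_left z.1 z.2)
  rw [gradY, gradient, hslice.fderiv, InnerProductSpace.toDual_symm_apply]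
  rfl

lemma inner_gradX (hF : DifferentiableAt ℝ F z) (v : EuclideanSpace ℝ (Fin d)) :
    ⟪gradX F z, v⟫ = fderiv ℝ F z (0, v) := by
  have hslice : HasFDerivAt (fun x => F (z.1, x)) (fderiv ℝ F z ∘L .inr ℝ _ _) z.2 :=
    HasFDerivAt.comp (g := F) z.2 hF.hasFDerivAt (hasFDerivAt_prodMk_right z.1 z.2)
  rw [gradX, gradient, hslice.fderiv, InnerProductSpace.toDual_symm_apply]
  rfl

lemma inner_gradY_add_inner_gradX (hF : DifferentiableAt ℝ F z) (h : Zsp m d) :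
    ⟪gradY F z, h.1⟫ + ⟪gradX F z, h.2⟫ = fderiv ℝ F z h := by
  rw [inner_gradY hF, inner_gradX hF, ← map_add, Prod.fst_add_snd]

lemma weightedForm_gradLam {lam : ℝ} (hlam : lam ≠ 0) (hF : DifferentiableAt ℝ F z) :
    weightedForm lam (gradLam lam F z) = fderiv ℝ F z := by
  refine ContinuousLinearMap.ext fun h => ?_
  rw [weightedForm_apply, gradLam, real_inner_smul_left, mul_inv_cancel_left₀ hlam,
    inner_gradY_add_inner_gradX hF]

lemma innerLam_eq_fderiv_gradLam (lam : ℝ) (hF : DifferentiableAt ℝ F z) (G : Zsp m d → ℝ) :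
    innerLam lam F G z = fderiv ℝ F z (gradLam lam G z) := by
  rw [← inner_gradY_add_inner_gradX hF, gradLam, real_inner_smul_right, innerLam, div_eq_inv_mul]

end WeightedCost

/-- uniform third-order estimate for the potential evaluated at a global
minimizer `z̄`:
`φ_β(z̄) = φ_β(z') + Σ_{j,k} β_jβ_k ⟨∇F_j(z'), ∇_λF_k(z')⟩ + O(‖β‖³)`. -/
theorem minimizer_potential_expansion
    (m d p : ℕ) (lam L M : ℝ) (hlam : 0 < lam)
    (F : Fin p → Zsp m d → ℝ)
    (hC2 : ∀ j, ContDiff ℝ 2 (F j))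
    (hL : ∀ j z, ‖fderiv ℝ (F j) z‖ ≤ L)
    (hM : ∀ j z, ‖fderiv ℝ (fderiv ℝ (F j)) z‖ ≤ M) :
    ∃ δ > (0 : ℝ), ∃ C ≥ (0 : ℝ), ∀ β : EuclideanSpace ℝ (Fin p), ‖β‖ ≤ δ →
      ∀ z' zbar : Zsp m d,
        (∀ z : Zsp m d,
            cost lam zbar z' - (∑ j, β j * F j zbar)
              ≤ cost lam z z' - ∑ j, β j * F j z) →
          |(∑ j, β j * F j zbar) - (∑ j, β j * F j z')
              - ∑ j, ∑ k, β j * β k * innerLam lam (F j) (F k) z'|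
            ≤ C * ‖β‖ ^ 3 := by
  have hF (j : Fin p) : Differentiable ℝ (F j) := (hC2 j).differentiable two_ne_zero
  have hDF (j : Fin p) : Differentiable ℝ (fderiv ℝ (F j)) :=
    ((hC2 j).fderiv_right (m := 1) (by norm_num)).differentiable one_ne_zero
  obtain ⟨C, hC, hexpansion⟩ := minimizer_potential_expansion_general
    (isCoercive_weightedForm hlam) (weightedForm_comm lam) hF
    (fun j => lipschitzWith_toNNReal_of_norm_fderiv_le (hF j) (hL j))
    (fun j => lipschitzWith_toNNReal_of_norm_fderiv_le (hDF j) (hM j))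
  refine ⟨1, one_pos, C, hC, fun β _ z' zbar hmin => ?_⟩
  simp only [cost_eq_weightedForm] at hmin
  have hlocal : IsLocalMin
      (fun z => weightedForm lam (z - z') (z - z') / 2 - ∑ j, β j * F j z) zbar := .of_forall hmin
  simpa only [innerLam_eq_fderiv_gradLam lam (hF _ z')] using
    hexpansion β z' zbar hlocal.fderiv_eq_zero _ fun k => weightedForm_gradLam hlam.ne' (hF k z')
end
end
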